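/- Let Ω ⊂ ℂⁿ (n ≥ 2) be a bounded domain and U ⊆ ℂⁿ an open set such that Ω ∩ U is a log-type ℂ-convex domain all of whose boundary points are Dini-smooth. Then for any open set V ⊆ U with closure(V) ⊆ U, there exists K > 0 such that K_Ω(p,q) ≤ K_{Ω∩U}(p,q) ≤ K_Ω(p,q) + K for all p, q ∈ V ∩ Ω. -/

import Mathlib

open Metric Set MeasureTheory Filter Topology

noncomputable section

variable {E : Type*} [NormedAddCommGroup E] [NormedSpace ℂ E]

/-- Distance from `x` to the boundary of `D`. -/
def bdist (D : Set E) (x : E) : ℝ := Metric.infDist x (frontier D)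

/-- Distance from `x` to the boundary of `D` along the complex line `x + ℂ v`. -/
def bdistDir (D : Set E) (x v : E) : ℝ :=
  Metric.infDist x (frontier D ∩ {w | ∃ c : ℂ, w = x + c • v})

/-- The infinitesimal Kobayashi (pseudo-)metric of `D ⊆ E`. -/
def kobMetric (D : Set E) (x v : E) : ℝ :=
  sInf { r : ℝ | ∃ (f : ℂ → E) (ξ : ℂ),
    DifferentiableOn ℂ f (ball (0:ℂ) 1) ∧ MapsTo f (ball (0:ℂ) 1) D ∧
    f 0 = x ∧ ξ • derivWithin f (ball (0:ℂ) 1) 0 = v ∧ r = ‖ξ‖ }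

/-- `σ` is absolutely continuous on `[a,b]`, with a.e. derivative `g`. -/
def IsACWithDeriv (σ g : ℝ → E) (a b : ℝ) : Prop :=
  IntervalIntegrable g volume a b ∧
  ∀ t ∈ Icc a b, σ t = σ a + ∫ s in a..t, g s

/-- The Kobayashi pseudo-distance of `D`, defined via lengths of absolutely
continuous curves (Venturini's description). -/
def kobDist (D : Set E) (x y : E) : ℝ :=
  sInf { r : ℝ | ∃ (a b : ℝ) (σ g : ℝ → E), a ≤ b ∧
    IsACWithDeriv σ g a b ∧ MapsTo σ (Icc a b) D ∧ σ a = x ∧ σ b = y ∧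
    r = ∫ t in a..b, kobMetric D (σ t) (g t) }

/-- Log-type convex domain, with explicit constants `C, ν > 0`. -/
def LogTypeConvexWith (D : Set E) (C ν : ℝ) : Prop :=
  IsOpen D ∧ D.Nonempty ∧ Bornology.IsBounded D ∧ Convex ℝ D ∧ 0 < C ∧ 0 < ν ∧
  ∀ z ∈ D, ∀ v : E, v ≠ 0 →
    bdistDir D z v ≤ C / |Real.log (bdist D z)| ^ (1 + ν)

/-- Log-type convex domain. -/
def LogTypeConvex (D : Set E) : Prop := ∃ C ν : ℝ, LogTypeConvexWith D C ν

/-- A `ℂ`-convex set: every nonempty intersection with a complex affine line is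
connected and simply connected. -/
def CConvex (D : Set E) : Prop :=
  ∀ z v : E, v ≠ 0 → (D ∩ {w | ∃ c : ℂ, w = z + c • v}).Nonempty →
    IsConnected (D ∩ {w | ∃ c : ℂ, w = z + c • v}) ∧
    SimplyConnectedSpace ↥(D ∩ {w | ∃ c : ℂ, w = z + c • v})

/-- Log-type `ℂ`-convex domain. -/
def LogTypeCConvex (D : Set E) : Prop :=
  IsOpen D ∧ D.Nonempty ∧ Bornology.IsBounded D ∧ CConvex D ∧
  ∃ C ν : ℝ, 0 < C ∧ 0 < ν ∧
    ∀ z ∈ D, ∀ v : E, v ≠ 0 →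
      bdistDir D z v ≤ C / |Real.log (bdist D z)| ^ (1 + ν)

/-- `σ : [a,b] → D` (with a.e. derivative `g`) is a `(λ,κ)`-almost geodesic for the
Kobayashi distance of `D`. -/
def AlmostGeodesicOn (D : Set E) (lam kap : ℝ) (σ g : ℝ → E) (a b : ℝ) : Prop :=
  MapsTo σ (Icc a b) D ∧ IsACWithDeriv σ g a b ∧
  (∀ s ∈ Icc a b, ∀ t ∈ Icc a b,
    (1 / lam) * |t - s| - kap ≤ kobDist D (σ s) (σ t) ∧
    kobDist D (σ s) (σ t) ≤ lam * |t - s| + kap) ∧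
  (∀ᵐ t ∂volume, t ∈ Icc a b → kobMetric D (σ t) (g t) ≤ lam)

/-- `σ : [a,b] → D` is a `C`-rough geodesic for the Kobayashi distance of `D`. -/
def RoughGeodesicOn (D : Set E) (C : ℝ) (σ : ℝ → E) (a b : ℝ) : Prop :=
  MapsTo σ (Icc a b) D ∧
  ∀ s ∈ Icc a b, ∀ t ∈ Icc a b,
    |t - s| - C ≤ kobDist D (σ s) (σ t) ∧ kobDist D (σ s) (σ t) ≤ |t - s| + C

/-- `ρ` is a `C¹` local defining function for `D` near `ξ` on the open set `W`. -/
def IsLocalDefiningFn (D : Set E) (ξ : E) (W : Set E) (ρ : E → ℝ) : Prop :=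
  IsOpen W ∧ ξ ∈ W ∧ ContDiffOn ℝ 1 ρ W ∧ (∀ x ∈ W, fderiv ℝ ρ x ≠ 0) ∧
  D ∩ W = {x ∈ W | ρ x < 0} ∧ frontier D ∩ W = {x ∈ W | ρ x = 0}

/-- `ξ` is a Dini-smooth boundary point of `D`: the boundary is `C¹` near `ξ` and the
unit normal admits a modulus of continuity `ω` satisfying the Dini condition. -/
def DiniSmoothBoundaryPoint (D : Set E) (ξ : E) : Prop :=
  ∃ (W : Set E) (ρ : E → ℝ) (ω : ℝ → ℝ),
    IsLocalDefiningFn D ξ W ρ ∧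
    (∀ t ∈ Icc (0:ℝ) 1, 0 ≤ ω t) ∧ MonotoneOn ω (Icc (0:ℝ) 1) ∧
    IntegrableOn (fun t => ω t / t) (Ioc (0:ℝ) 1) ∧
    ∀ x ∈ frontier D ∩ W, ∀ y ∈ frontier D ∩ W, ‖x - y‖ ≤ 1 →
      ‖(‖fderiv ℝ ρ x‖)⁻¹ • fderiv ℝ ρ x - (‖fderiv ℝ ρ y‖)⁻¹ • fderiv ℝ ρ y‖ ≤ ω ‖x - y‖

/-- `D` has `C^{1,ε}` boundary: near every boundary point there is a `C¹` defining
function whose differential is `ε`-Hölder. -/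
def HolderC1Boundary (D : Set E) (ε : ℝ) : Prop :=
  ∀ ξ ∈ frontier D, ∃ (W : Set E) (ρ : E → ℝ) (M : ℝ), 0 < M ∧
    IsLocalDefiningFn D ξ W ρ ∧
    ∀ x ∈ W, ∀ y ∈ W, ‖fderiv ℝ ρ x - fderiv ℝ ρ y‖ ≤ M * ‖x - y‖ ^ ε

/-- The complex affine tangent hyperplane of `∂D` at `x`, computed from a local
defining function `ρ`. -/
def complexTangentHyperplane (ρ : E → ℝ) (x : E) : Set E :=
  {w : E | fderiv ℝ ρ x (w - x) = 0 ∧ fderiv ℝ ρ x ((Complex.I : ℂ) • (w - x)) = 0}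

/-- The Gromov product of `x` and `y` with respect to the base point `o`, for the
Kobayashi distance of `D`. -/
def gromovProd (D : Set E) (o x y : E) : ℝ :=
  (kobDist D x o + kobDist D o y - kobDist D x y) / 2

end


open Metric Set MeasureTheory Filter Topology

section PartA
variable {E : Type*} [NormedAddCommGroup E] [NormedSpace ℂ E]

theorem kobMetric_bddBelow (D : Set E) (x v : E) : BddBelow { r : ℝ | ∃ (f : ℂ → E) (ξ : ℂ),
    DifferentiableOn ℂ f (ball (0:ℂ) 1) ∧ MapsTo f (ball (0:ℂ) 1) D ∧
    f 0 = x ∧ ξ • derivWithin f (ball (0:ℂ) 1) 0 = v ∧ r = ‖ξ‖ } := by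
  refine ⟨0, ?_⟩
  rintro r ⟨f, ξ, -, -, -, -, rfl⟩
  exact norm_nonneg _

theorem derivWithin_ball_zero (f : ℂ → E) : derivWithin f (ball (0:ℂ) 1) 0 = deriv f 0 :=
  derivWithin_of_isOpen isOpen_ball (by simp)

theorem kobMetric_nonneg (D : Set E) (x v : E) : 0 ≤ kobMetric D x v := by
  apply Real.sInf_nonneg
  rintro r ⟨f, ξ, -, -, -, -, rfl⟩
  exact norm_nonneg _

theorem kobMetric_le {D : Set E} {x v : E} (f : ℂ → E) (ξ : ℂ)
    (hf : DifferentiableOn ℂ f (ball (0:ℂ) 1)) (hm : MapsTo f (ball (0:ℂ) 1) D)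
    (h0 : f 0 = x) (hv : ξ • deriv f 0 = v) : kobMetric D x v ≤ ‖ξ‖ := by
  apply csInf_le (kobMetric_bddBelow D x v)
  exact ⟨f, ξ, hf, hm, h0, by rw [derivWithin_ball_zero]; exact hv, rfl⟩

theorem lin_disc_deriv (x w : E) : deriv (fun z : ℂ => x + z • w) 0 = w := by
  have : HasDerivAt (fun z : ℂ => x + z • w) ((1:ℂ) • w) 0 :=
    ((hasDerivAt_id (0:ℂ)).smul_const w).const_add x
  simpa using this.deriv

theorem lin_disc_diff (x w : E) : Differentiable ℂ (fun z : ℂ => x + z • w) := by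
  fun_prop

theorem exists_lin_disc {D : Set E} {x : E} {r : ℝ} (hr : 0 < r) (hb : ball x r ⊆ D) (v : E)
    (hv : v ≠ 0) :
    ∃ (f : ℂ → E) (ξ : ℂ),
    DifferentiableOn ℂ f (ball (0:ℂ) 1) ∧ MapsTo f (ball (0:ℂ) 1) D ∧
    f 0 = x ∧ ξ • deriv f 0 = v ∧ ‖ξ‖ = ‖v‖ / r := by
  have hv' : 0 < ‖v‖ := norm_pos_iff.mpr hv
  refine ⟨fun z => x + z • ((r / ‖v‖ : ℝ) : ℂ) • v, ((‖v‖ / r : ℝ) : ℂ), ?_, ?_, by simp, ?_, ?_⟩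
  · exact (lin_disc_diff _ _).differentiableOn
  · intro z hz
    apply hb
    simp only [mem_ball, dist_zero_right] at hz
    simp only [mem_ball, dist_self_add_left, norm_smul, Complex.norm_real, Real.norm_eq_abs]
    rw [abs_of_pos (by positivity), div_mul_cancel₀ _ hv'.ne']
    nlinarith
  · rw [lin_disc_deriv, smul_smul, ← Complex.ofReal_mul, div_mul_div_comm, mul_comm, div_self
      (by positivity)]
    simp
  · rw [Complex.norm_real, Real.norm_eq_abs, abs_of_pos (by positivity)]

theorem kobMetric_le_div {D : Set E} {x : E} {r : ℝ} (hr : 0 < r) (hb : ball x r ⊆ D) (v : E) :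
    kobMetric D x v ≤ ‖v‖ / r := by
  by_cases hv : v = 0
  · subst hv
    have := kobMetric_le (D := D) (x := x) (v := 0) (fun _ => x) 0 (by fun_prop)
      (fun z _ => hb (by simp [hr])) rfl (by simp)
    simpa using this
  · obtain ⟨f, ξ, h1, h2, h3, h4, h5⟩ := exists_lin_disc hr hb v hv
    rw [← h5]
    exact kobMetric_le f ξ h1 h2 h3 h4

theorem kobMetric_set_nonempty {D : Set E} (hD : IsOpen D) {x : E} (hx : x ∈ D) (v : E) :
    { r : ℝ | ∃ (f : ℂ → E) (ξ : ℂ),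
    DifferentiableOn ℂ f (ball (0:ℂ) 1) ∧ MapsTo f (ball (0:ℂ) 1) D ∧
    f 0 = x ∧ ξ • derivWithin f (ball (0:ℂ) 1) 0 = v ∧ r = ‖ξ‖ }.Nonempty := by
  by_cases hv : v = 0
  · subst hv
    exact ⟨_, fun _ => x, 0, by fun_prop, fun z _ => hx, rfl, by simp, rfl⟩
  · obtain ⟨r, hr, hb⟩ := Metric.isOpen_iff.mp hD x hx
    obtain ⟨f, ξ, h1, h2, h3, h4, h5⟩ := exists_lin_disc hr hb v hv
    exact ⟨_, f, ξ, h1, h2, h3, by rw [derivWithin_ball_zero]; exact h4, rfl⟩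

theorem le_kobMetric {D : Set E} (hD : IsOpen D) {x : E} (hx : x ∈ D) {v : E} {c : ℝ}
    (h : ∀ (f : ℂ → E) (ξ : ℂ), DifferentiableOn ℂ f (ball (0:ℂ) 1) →
      MapsTo f (ball (0:ℂ) 1) D → f 0 = x → ξ • deriv f 0 = v → c ≤ ‖ξ‖) :
    c ≤ kobMetric D x v := by
  apply le_csInf (kobMetric_set_nonempty hD hx v)
  rintro r ⟨f, ξ, h1, h2, h3, h4, rfl⟩
  rw [derivWithin_ball_zero] at h4
  exact h f ξ h1 h2 h3 h4

theorem kobMetric_mono {D D' : Set E} (hD : IsOpen D) (h : D ⊆ D') {x : E} (hx : x ∈ D) (v : E) :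
    kobMetric D' x v ≤ kobMetric D x v :=
  le_kobMetric hD hx fun f ξ h1 h2 h3 h4 => kobMetric_le f ξ h1 (h2.mono_right h) h3 h4

theorem kobMetric_neg (D : Set E) (x v : E) : kobMetric D x (-v) = kobMetric D x v := by
  have key : ∀ w : E, { r : ℝ | ∃ (f : ℂ → E) (ξ : ℂ),
    DifferentiableOn ℂ f (ball (0:ℂ) 1) ∧ MapsTo f (ball (0:ℂ) 1) D ∧
    f 0 = x ∧ ξ • derivWithin f (ball (0:ℂ) 1) 0 = w ∧ r = ‖ξ‖ } ⊆ { r : ℝ | ∃ (f : ℂ → E) (ξ : ℂ),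
    DifferentiableOn ℂ f (ball (0:ℂ) 1) ∧ MapsTo f (ball (0:ℂ) 1) D ∧
    f 0 = x ∧ ξ • derivWithin f (ball (0:ℂ) 1) 0 = -w ∧ r = ‖ξ‖ } := by
    rintro w r ⟨f, ξ, h1, h2, h3, h4, rfl⟩
    exact ⟨f, -ξ, h1, h2, h3, by rw [neg_smul, h4], by simp⟩
  unfold kobMetric
  congr 1
  apply Subset.antisymm
  · have := key (-v)
    rwa [neg_neg] at this
  · exact key v

/-- Upper semicontinuity. -/
theorem kobMetric_usc {D : Set E} (hD : IsOpen D) {x₀ v₀ : E} (hx₀ : x₀ ∈ D) {r : ℝ}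
    (h : kobMetric D x₀ v₀ < r) :
    ∀ᶠ p : E × E in 𝓝 (x₀, v₀), kobMetric D p.1 p.2 < r := by
  obtain ⟨r', ⟨f, ξ, h1, h2, h3, h4, rfl⟩, hr⟩ :=
    exists_lt_of_csInf_lt (kobMetric_set_nonempty hD hx₀ v₀) h
  rw [derivWithin_ball_zero] at h4
  -- reduce to `ξ ≠ 0`
  have hr0 : 0 < r := lt_of_le_of_lt (norm_nonneg _) hr
  obtain ⟨f, ξ, h1, h2, h3, h4, hr, hξ⟩ : ∃ (f : ℂ → E) (ξ : ℂ),
    DifferentiableOn ℂ f (ball (0:ℂ) 1) ∧ MapsTo f (ball (0:ℂ) 1) D ∧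
    f 0 = x₀ ∧ ξ • deriv f 0 = v₀ ∧ ‖ξ‖ < r ∧ ξ ≠ 0 := by
    by_cases hξ : ξ = 0
    · refine ⟨fun _ => x₀, ((r / 2 : ℝ) : ℂ), by fun_prop, fun z _ => hx₀, rfl, ?_, ?_, ?_⟩
      · rw [← h4, hξ]; simp
      · rw [Complex.norm_real, Real.norm_eq_abs, abs_of_pos (by positivity)]; linarith
      · exact_mod_cast (by positivity : (r / 2 : ℝ) ≠ 0)
    · exact ⟨f, ξ, h1, h2, h3, h4, hr, hξ⟩
  have hξ' : 0 < ‖ξ‖ := norm_pos_iff.mpr hξ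
  obtain ⟨ρ, hρ1, hρ2⟩ : ∃ ρ : ℝ, ‖ξ‖ / r < ρ ∧ ρ < 1 :=
    exists_between ((div_lt_one hr0).mpr hr)
  have hρ0 : 0 < ρ := lt_of_le_of_lt (by positivity) hρ1
  have hsub : closedBall (0:ℂ) ρ ⊆ ball 0 1 := closedBall_subset_ball hρ2
  have hK : IsCompact (f '' closedBall (0:ℂ) ρ) :=
    (isCompact_closedBall _ _).image_of_continuousOn (h1.continuousOn.mono hsub)
  have hKD : f '' closedBall (0:ℂ) ρ ⊆ D := by
    rintro _ ⟨z, hz, rfl⟩; exact h2 (hsub hz)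
  obtain ⟨ε, hε, hεD⟩ := hK.exists_thickening_subset_open hD hKD
  have hc : Continuous fun p : E × E => ‖p.1 - x₀‖ + ‖p.2 - v₀‖ / ‖ξ / ρ‖ := by fun_prop
  have hev : ∀ᶠ p : E × E in 𝓝 (x₀, v₀), ‖p.1 - x₀‖ + ‖p.2 - v₀‖ / ‖ξ / ρ‖ < ε := by
    apply hc.continuousAt.eventually_lt continuousAt_const
    simpa using hε
  filter_upwards [hev] with p hp
  have hξρ : ξ / ρ ≠ 0 := div_ne_zero hξ (by exact_mod_cast hρ0.ne')
  have hfd : HasDerivAt f (deriv f 0) 0 :=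
    (h1.differentiableAt (isOpen_ball.mem_nhds (by simp))).hasDerivAt
  have hder : HasDerivAt (fun z : ℂ => f (ρ * z) + ((p.1 - x₀) + z • ((ξ / ρ)⁻¹ • (p.2 - v₀))))
      (((ρ:ℂ) * 1) • deriv f 0 + (1:ℂ) • ((ξ / ρ)⁻¹ • (p.2 - v₀))) 0 := by
    apply HasDerivAt.add
    · have h : HasDerivAt (fun z : ℂ => (ρ:ℂ) * z) ((ρ:ℂ) * 1) 0 :=
        (hasDerivAt_id (0:ℂ)).const_mul _
      have hfd' : HasDerivAt f (deriv f 0) ((ρ:ℂ) * 0) := by simpa using hfd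
      exact hfd'.scomp (0:ℂ) h
    · exact ((hasDerivAt_id (0:ℂ)).smul_const _).const_add _
  refine lt_of_le_of_lt (kobMetric_le (fun z : ℂ => f (ρ * z) + ((p.1 - x₀) + z • ((ξ / ρ)⁻¹ • (p.2 - v₀))))
    (ξ / ρ) ?_ ?_ ?_ ?_) ?_
  · apply DifferentiableOn.add
    · apply h1.comp (by fun_prop)
      intro z hz
      simp only [mem_ball, dist_zero_right, norm_mul, Complex.norm_real, Real.norm_eq_abs,
        abs_of_pos hρ0] at hz ⊢
      nlinarith [norm_nonneg z]
    · fun_prop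
  · intro z hz
    apply hεD
    simp only [mem_ball, dist_zero_right] at hz
    rw [mem_thickening_iff]
    refine ⟨f (ρ * z), ⟨ρ * z, ?_, rfl⟩, ?_⟩
    · simp only [mem_closedBall, dist_zero_right, norm_mul, Complex.norm_real, Real.norm_eq_abs,
        abs_of_pos hρ0]
      nlinarith [norm_nonneg z]
    · rw [dist_self_add_left]
      refine lt_of_le_of_lt ((norm_add_le _ _).trans ?_) hp
      gcongr
      rw [norm_smul, norm_smul, norm_inv]
      have e : ‖p.2 - v₀‖ / ‖ξ / ↑ρ‖ = ‖ξ / ↑ρ‖⁻¹ * ‖p.2 - v₀‖ := div_eq_inv_mul _ _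
      rw [e]
      have : 0 ≤ ‖ξ / ↑ρ‖⁻¹ * ‖p.2 - v₀‖ := by positivity
      nlinarith
  · simp [h3]
  · rw [hder.deriv, smul_add, one_smul, smul_smul, smul_smul, mul_inv_cancel₀ hξρ, mul_one,
      div_mul_cancel₀ _ (by exact_mod_cast hρ0.ne'), h4]
    simp
  · rw [norm_div, Complex.norm_real, Real.norm_eq_abs, abs_of_pos hρ0]
    rw [div_lt_iff₀ hρ0]
    rw [div_lt_iff₀ hr0] at hρ1
    linarith

theorem IsACWithDeriv.continuousOn {σ g : ℝ → E} {a b : ℝ} (hab : a ≤ b)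
    (h : IsACWithDeriv σ g a b) : ContinuousOn σ (Icc a b) := by
  have h1 : ContinuousOn (fun t => σ a + ∫ s in a..t, g s) (Icc a b) := by
    apply continuousOn_const.add
    have := intervalIntegral.continuousOn_primitive_interval' h.1 (left_mem_uIcc)
    rwa [uIcc_of_le hab] at this
  exact h1.congr h.2

theorem kob_integrable [ProperSpace E] {D : Set E} (hD : IsOpen D) {σ g : ℝ → E} {a b : ℝ}
    (hab : a ≤ b) (h : IsACWithDeriv σ g a b) (hm : MapsTo σ (Icc a b) D) :
    IntervalIntegrable (fun t => kobMetric D (σ t) (g t)) volume a b := by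
  classical
  have hσ := h.continuousOn hab
  rw [intervalIntegrable_iff_integrableOn_Icc_of_le hab]
  have hg : IntegrableOn g (Icc a b) :=
    (intervalIntegrable_iff_integrableOn_Icc_of_le hab).mp h.1
  borelize E
  -- measurability
  let F : E × E → ℝ := fun p => if p.1 ∈ D then kobMetric D p.1 p.2 else 0
  have hF : Measurable F := by
    apply measurable_of_Iio
    intro r
    have hopen : IsOpen {p : E × E | p.1 ∈ D ∧ kobMetric D p.1 p.2 < r} := by
      rw [isOpen_iff_mem_nhds]
      rintro ⟨x, v⟩ ⟨hx, hr⟩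
      have h1 : ∀ᶠ p : E × E in 𝓝 (x, v), p.1 ∈ D :=
        (continuous_fst.isOpen_preimage D hD).mem_nhds hx
      filter_upwards [h1, kobMetric_usc hD hx hr] with p h1 h2 using ⟨h1, h2⟩
    have hmD : MeasurableSet {p : E × E | p.1 ∈ D} := measurable_fst hD.measurableSet
    have : F ⁻¹' Iio r = {p : E × E | p.1 ∈ D ∧ kobMetric D p.1 p.2 < r} ∪
        ({p : E × E | p.1 ∈ D}ᶜ ∩ {p | (0:ℝ) < r}) := by
      ext p
      by_cases hp : p.1 ∈ D <;> simp [F, hp]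
    rw [this]
    exact hopen.measurableSet.union (hmD.compl.inter (MeasurableSet.const _))
  have hmeas : AEStronglyMeasurable (fun t => kobMetric D (σ t) (g t))
      (volume.restrict (Icc a b)) := by
    have h1 : AEMeasurable σ (volume.restrict (Icc a b)) :=
      (hσ.aestronglyMeasurable measurableSet_Icc).aemeasurable
    have h2 : AEMeasurable g (volume.restrict (Icc a b)) := hg.aestronglyMeasurable.aemeasurable
    have h3 : AEMeasurable (fun t => F (σ t, g t)) (volume.restrict (Icc a b)) :=
      hF.comp_aemeasurable (h1.prodMk h2)
    refine (h3.congr ?_).aestronglyMeasurable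
    filter_upwards [ae_restrict_mem measurableSet_Icc] with t ht
    simp [F, hm ht]
  -- domination
  have hK : IsCompact (σ '' Icc a b) := isCompact_Icc.image_of_continuousOn hσ
  obtain ⟨ε, hε, hεD⟩ := hK.exists_thickening_subset_open hD hm.image_subset
  refine Integrable.mono' (hg.norm.div_const ε) hmeas ?_
  filter_upwards [ae_restrict_mem measurableSet_Icc] with t ht
  rw [Real.norm_eq_abs, abs_of_nonneg (kobMetric_nonneg _ _ _)]
  apply kobMetric_le_div hε
  exact (ball_subset_thickening (mem_image_of_mem σ ht) ε).trans hεD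

/-- There is a curve in `D` from `x` to `y` of Kobayashi length at most `r`. -/
def HasCurve (D : Set E) (x y : E) (r : ℝ) : Prop :=
  ∃ (a b : ℝ) (σ g : ℝ → E), a ≤ b ∧
    IsACWithDeriv σ g a b ∧ MapsTo σ (Icc a b) D ∧ σ a = x ∧ σ b = y ∧
    ∫ t in a..b, kobMetric D (σ t) (g t) ≤ r

theorem kobSet_bddBelow (D : Set E) (x y : E) :
    BddBelow { r : ℝ | ∃ (a b : ℝ) (σ g : ℝ → E), a ≤ b ∧
    IsACWithDeriv σ g a b ∧ MapsTo σ (Icc a b) D ∧ σ a = x ∧ σ b = y ∧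
    r = ∫ t in a..b, kobMetric D (σ t) (g t) } := by
  refine ⟨0, ?_⟩
  rintro r ⟨a, b, σ, g, hab, -, -, -, -, rfl⟩
  exact intervalIntegral.integral_nonneg hab fun _ _ => kobMetric_nonneg _ _ _

theorem HasCurve.kobDist_le {D : Set E} {x y : E} {r : ℝ} (h : HasCurve D x y r) :
    kobDist D x y ≤ r := by
  obtain ⟨a, b, σ, g, hab, h1, h2, h3, h4, h5⟩ := h
  exact (csInf_le (kobSet_bddBelow D x y) ⟨a, b, σ, g, hab, h1, h2, h3, h4, rfl⟩).trans h5

theorem HasCurve.mono_right {D : Set E} {x y : E} {r s : ℝ} (h : HasCurve D x y r) (hrs : r ≤ s) :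
    HasCurve D x y s := by
  obtain ⟨a, b, σ, g, hab, h1, h2, h3, h4, h5⟩ := h
  exact ⟨a, b, σ, g, hab, h1, h2, h3, h4, h5.trans hrs⟩

theorem HasCurve.exists_near {D : Set E} {x y : E} {r : ℝ} (h : HasCurve D x y r) {ε : ℝ}
    (hε : 0 < ε) :
    ∃ (a b : ℝ) (σ g : ℝ → E), a ≤ b ∧
    IsACWithDeriv σ g a b ∧ MapsTo σ (Icc a b) D ∧ σ a = x ∧ σ b = y ∧
    ∫ t in a..b, kobMetric D (σ t) (g t) < kobDist D x y + ε := by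
  obtain ⟨a, b, σ, g, hab, h1, h2, h3, h4, h5⟩ := h
  obtain ⟨s, ⟨a, b, σ, g, hab, h1, h2, h3, h4, rfl⟩, hs⟩ := exists_lt_of_csInf_lt
    (s := { r : ℝ | ∃ (a b : ℝ) (σ g : ℝ → E), a ≤ b ∧
    IsACWithDeriv σ g a b ∧ MapsTo σ (Icc a b) D ∧ σ a = x ∧ σ b = y ∧
    r = ∫ t in a..b, kobMetric D (σ t) (g t) })
    ⟨_, a, b, σ, g, hab, h1, h2, h3, h4, rfl⟩ (b := kobDist D x y + ε)
    (by change kobDist D x y < _; linarith)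
  exact ⟨a, b, σ, g, hab, h1, h2, h3, h4, hs⟩

theorem kob_length_mono [ProperSpace E] {D D' : Set E} (hD : IsOpen D) (hDD : D ⊆ D')
    {σ g : ℝ → E} {a b : ℝ}
    (hab : a ≤ b) (h : IsACWithDeriv σ g a b) (hm : MapsTo σ (Icc a b) D)  :
    ∫ t in a..b, kobMetric D' (σ t) (g t) ≤ ∫ t in a..b, kobMetric D (σ t) (g t) := by
  rw [intervalIntegral.integral_of_le hab, intervalIntegral.integral_of_le hab]
  apply integral_mono_of_nonneg
  · exact Eventually.of_forall fun _ => kobMetric_nonneg _ _ _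
  · exact (kob_integrable hD hab h hm).1
  · filter_upwards [ae_restrict_mem measurableSet_Ioc] with t ht
    exact kobMetric_mono hD hDD (hm (Ioc_subset_Icc_self ht)) _

theorem HasCurve.mono_set [ProperSpace E] {D D' : Set E} (hD : IsOpen D) (hDD : D ⊆ D')
    {x y : E} {r : ℝ} (h : HasCurve D x y r) : HasCurve D' x y r := by
  obtain ⟨a, b, σ, g, hab, h1, h2, h3, h4, h5⟩ := h
  exact ⟨a, b, σ, g, hab, h1, h2.mono_right hDD, h3, h4,
    (kob_length_mono hD hDD hab h1 h2).trans h5⟩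

theorem kobDist_mono [ProperSpace E] {D D' : Set E} (hD : IsOpen D) (hDD : D ⊆ D')
    {x y : E} {r : ℝ} (h : HasCurve D x y r) : kobDist D' x y ≤ kobDist D x y := by
  refine le_of_forall_pos_le_add fun ε hε => ?_
  obtain ⟨a, b, σ, g, hab, h1, h2, h3, h4, h5⟩ := h.exists_near hε
  exact (HasCurve.mono_set hD hDD ⟨a, b, σ, g, hab, h1, h2, h3, h4, h5.le⟩).kobDist_le

theorem IsACWithDeriv.sub [CompleteSpace E] {σ g : ℝ → E} {a b c d : ℝ}
    (h : IsACWithDeriv σ g a b) (hac : a ≤ c) (hcd : c ≤ d) (hdb : d ≤ b) :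
    IsACWithDeriv σ g c d := by
  have hI : ∀ u ∈ Icc a b, ∀ w ∈ Icc a b, IntervalIntegrable g volume u w := by
    intro u hu w hw
    apply h.1.mono_set
    have hab : a ≤ b := by linarith
    rw [uIcc_of_le hab]
    exact uIcc_subset_Icc hu hw
  refine ⟨hI c ⟨hac, by linarith⟩ d ⟨by linarith, hdb⟩, ?_⟩
  intro t ht
  have ht' : t ∈ Icc a b := ⟨by linarith [ht.1], by linarith [ht.2]⟩
  have hc' : c ∈ Icc a b := ⟨hac, by linarith⟩
  have ha' : a ∈ Icc a b := ⟨le_refl _, by linarith⟩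
  rw [h.2 t ht', h.2 c hc', add_assoc,
    intervalIntegral.integral_add_adjacent_intervals (hI a ha' c hc') (hI c hc' t ht')]

theorem IsACWithDeriv.shift {σ g : ℝ → E} {a b : ℝ}
    (h : IsACWithDeriv σ g a b) (c : ℝ) :
    IsACWithDeriv (fun t => σ (t - c)) (fun t => g (t - c)) (a + c) (b + c) := by
  refine ⟨h.1.comp_sub_right c, ?_⟩
  intro t ht
  have : t - c ∈ Icc a b := ⟨by linarith [ht.1], by linarith [ht.2]⟩
  simp only [h.2 _ this, add_sub_cancel_right]
  congr 1
  rw [intervalIntegral.integral_comp_sub_right (fun s => g s) c]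
  simp

theorem IsACWithDeriv.reverse {σ g : ℝ → E} [CompleteSpace E] {a b : ℝ}
    (h : IsACWithDeriv σ g a b) (hab : a ≤ b) :
    IsACWithDeriv (fun t => σ (-t)) (fun t => - g (-t)) (-b) (-a) := by
  refine ⟨?_, ?_⟩
  · have := (h.1.comp_sub_left 0).neg.symm
    simpa [Function.comp_def, Pi.neg_def] using this
  intro t ht
  have h1 : -t ∈ Icc a b := ⟨by linarith [ht.2], by linarith [ht.1]⟩
  have h2 := (h.sub h1.1 h1.2 le_rfl).2 b ⟨h1.2, le_rfl⟩
  simp only [neg_neg]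
  rw [intervalIntegral.integral_neg, intervalIntegral.integral_comp_neg (fun s => g s), neg_neg, h2]
  simp

theorem HasCurve.symm [ProperSpace E] {D : Set E} {x y : E} {r : ℝ} (h : HasCurve D x y r) :
    HasCurve D y x r := by
  obtain ⟨a, b, σ, g, hab, h1, h2, h3, h4, h5⟩ := h
  refine ⟨-b, -a, _, _, by linarith, h1.reverse hab, ?_, by simpa using h4, by simpa using h3, ?_⟩
  · intro t ht
    exact h2 ⟨by linarith [ht.2], by linarith [ht.1]⟩
  · simp only [kobMetric_neg]
    rw [intervalIntegral.integral_comp_neg (fun s => kobMetric D (σ s) (g s)), neg_neg, neg_neg]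
    exact h5

theorem HasCurve.trans [ProperSpace E] {D : Set E} (hD : IsOpen D) {x y z : E} {r s : ℝ}
    (h : HasCurve D x y r) (h' : HasCurve D y z s) : HasCurve D x z (r + s) := by
  obtain ⟨a, b, σ, g, hab, h1, h2, h3, h4, h5⟩ := h
  obtain ⟨c, d, τ₀, k₀, hcd, t1, t2, t3, t4, t5⟩ := h'
  obtain ⟨e, τ, k, hbe, t1, t2, t3, t4, t5⟩ : ∃ (e : ℝ) (τ k : ℝ → E), b ≤ e ∧
    IsACWithDeriv τ k b e ∧ MapsTo τ (Icc b e) D ∧ τ b = y ∧ τ e = z ∧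
    ∫ t in b..e, kobMetric D (τ t) (k t) ≤ s := by
    have := t1.shift (b - c)
    refine ⟨d + (b - c), _, _, by linarith, by simpa using this, ?_, ?_, ?_, ?_⟩
    · intro t ht
      exact t2 ⟨by linarith [ht.1], by linarith [ht.2]⟩
    · simpa using t3
    · simpa using t4
    · rw [intervalIntegral.integral_comp_sub_right (fun t => kobMetric D (τ₀ t) (k₀ t)) (b - c)]
      simpa using t5
  set ρ : ℝ → E := fun t => if t ≤ b then σ t else τ t with hρ
  set l : ℝ → E := fun t => if t ≤ b then g t else k t with hl
  have hρ1 : ∀ t ≤ b, ρ t = σ t := fun t ht => by simp [hρ, ht]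
  have hρ2 : ∀ t, b ≤ t → ρ t = τ t := fun t ht => by
    rcases ht.eq_or_lt with rfl | ht
    · rw [hρ1 _ le_rfl, h4, t3]
    · simp [hρ, not_le.mpr ht]
  have hl1 : ∀ t ≤ b, l t = g t := fun t ht => by simp [hl, ht]
  have hl2 : ∀ t, b < t → l t = k t := fun t ht => by simp [hl, not_le.mpr ht]
  have i1 : ∀ t ∈ Icc a b, IntervalIntegrable l volume a t := fun t ht => by
    refine (h1.1.mono_set (uIcc_subset_uIcc left_mem_uIcc
      (by rw [uIcc_of_le hab]; exact ht))).congr ?_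
    intro s hs
    rw [uIoc_of_le ht.1] at hs
    exact (hl1 s (hs.2.trans ht.2)).symm
  have i2 : ∀ t ∈ Icc b e, IntervalIntegrable l volume b t := fun t ht => by
    refine (t1.1.mono_set (uIcc_subset_uIcc left_mem_uIcc
      (by rw [uIcc_of_le hbe]; exact ht))).congr ?_
    intro s hs
    rw [uIoc_of_le ht.1] at hs
    exact (hl2 s hs.1).symm
  have e1 : ∀ t ∈ Icc a b, ∫ s in a..t, l s = ∫ s in a..t, g s := fun t ht => by
    apply intervalIntegral.integral_congr
    intro s hs
    rw [uIcc_of_le ht.1] at hs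
    exact hl1 s (hs.2.trans ht.2)
  have e2 : ∀ t ∈ Icc b e, ∫ s in b..t, l s = ∫ s in b..t, k s := fun t ht => by
    apply intervalIntegral.integral_congr_ae
    refine Eventually.of_forall fun s hs => ?_
    rw [uIoc_of_le ht.1] at hs
    exact hl2 s hs.1
  have bI : b ∈ Icc a b := ⟨hab, le_rfl⟩
  have hAC : IsACWithDeriv ρ l a e := by
    refine ⟨(i1 b bI).trans (i2 e ⟨hbe, le_rfl⟩), ?_⟩
    intro t ht
    rw [hρ1 a hab]
    rcases le_total t b with htb | htb
    · rw [hρ1 t htb, e1 t ⟨ht.1, htb⟩]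
      exact h1.2 t ⟨ht.1, htb⟩
    · rw [hρ2 t htb, ← intervalIntegral.integral_add_adjacent_intervals (i1 b bI) (i2 t ⟨htb, ht.2⟩),
        e1 b bI, e2 t ⟨htb, ht.2⟩, ← add_assoc, ← h1.2 b bI, h4, ← t3]
      exact t1.2 t ⟨htb, ht.2⟩
  have hm : MapsTo ρ (Icc a e) D := by
    intro t ht
    rcases le_total t b with htb | htb
    · rw [hρ1 t htb]; exact h2 ⟨ht.1, htb⟩
    · rw [hρ2 t htb]; exact t2 ⟨htb, ht.2⟩
  refine ⟨a, e, ρ, l, hab.trans hbe, hAC, hm, by rw [hρ1 a hab, h3], by rw [hρ2 e hbe, t4], ?_⟩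
  have hInt := kob_integrable hD (hab.trans hbe) hAC hm
  have hu : uIcc a e = Icc a e := uIcc_of_le (hab.trans hbe)
  have hbm : b ∈ uIcc a e := by rw [hu]; exact ⟨hab, hbe⟩
  rw [← intervalIntegral.integral_add_adjacent_intervals
    (hInt.mono_set (uIcc_subset_uIcc left_mem_uIcc hbm))
    (hInt.mono_set (uIcc_subset_uIcc hbm right_mem_uIcc))]
  apply add_le_add
  · refine le_trans (le_of_eq ?_) h5
    apply intervalIntegral.integral_congr
    intro s hs
    rw [uIcc_of_le hab] at hs
    simp only [hρ1 s hs.2, hl1 s hs.2]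
  · refine le_trans (le_of_eq ?_) t5
    apply intervalIntegral.integral_congr_ae
    refine Eventually.of_forall fun s hs => ?_
    rw [uIoc_of_le hbe] at hs
    simp only [hρ2 s hs.1.le, hl2 s hs.1]

/-- Length of a straight segment with control of the boundary distance. -/
theorem HasCurve.segment [ProperSpace E] {D : Set E} (hD : IsOpen D) {x w : E} {T : ℝ} (hT : 0 ≤ T)
    (φ : ℝ → ℝ) (hφc : ContinuousOn φ (Icc 0 T)) (hφ : ∀ t ∈ Icc 0 T, 0 < φ t)
    (hb : ∀ t ∈ Icc 0 T, ball (x + t • w) (φ t) ⊆ D) :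
    HasCurve D x (x + T • w) (∫ t in (0:ℝ)..T, ‖w‖ / φ t) := by
  have hAC : IsACWithDeriv (fun t : ℝ => x + t • w) (fun _ => w) 0 T := by
    refine ⟨intervalIntegrable_const, ?_⟩
    intro t ht
    simp
  have hm : MapsTo (fun t : ℝ => x + t • w) (Icc 0 T) D := fun t ht =>
    hb t ht (by simp [hφ t ht])
  refine ⟨0, T, _, _, hT, hAC, hm, by simp, rfl, ?_⟩
  apply intervalIntegral.integral_mono_on hT (kob_integrable hD hT hAC hm)
  · apply ContinuousOn.intervalIntegrable
    rw [uIcc_of_le hT]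
    exact continuousOn_const.div hφc fun t ht => (hφ t ht).ne'
  · intro t ht
    exact kobMetric_le_div (hφ t ht) (hb t ht) w

end PartA

open Metric Set MeasureTheory Filter Topology

section PartB
variable {E : Type*} [NormedAddCommGroup E] [NormedSpace ℂ E]

theorem log_unique {A : Type*} [TopologicalSpace A] {s : Set A} (hs : IsPreconnected s)
    {f g : A → ℂ} (hf : ContinuousOn f s) (hg : ContinuousOn g s)
    (h : ∀ a ∈ s, Complex.exp (f a) = Complex.exp (g a)) {a : A} (ha : a ∈ s) (hfa : f a = g a) :
    EqOn f g s := by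
  refine Complex.isCoveringMap_exp.eqOn_of_comp_eqOn hs hf hg ?_ ha hfa
  intro x hx
  exact Subtype.ext (h x hx)

theorem line_isEmbedding (z v : E) (hv : v ≠ 0) : IsEmbedding (fun t : ℂ => z + t • v) := by
  have h1 : IsClosedEmbedding (fun t : ℂ => t • v) := isClosedEmbedding_smul_left hv
  exact (Homeomorph.addLeft z).isEmbedding.comp h1.isEmbedding

theorem slice_simplyConnected {D : Set E} (hC : CConvex D) (z v : E) (hv : v ≠ 0)
    (hne : ∃ t : ℂ, z + t • v ∈ D) : IsSimplyConnected {t : ℂ | z + t • v ∈ D} := by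
  have himg : (fun t : ℂ => z + t • v) '' {t : ℂ | z + t • v ∈ D} =
      D ∩ {w | ∃ c : ℂ, w = z + c • v} := by
    ext w
    constructor
    · rintro ⟨t, ht, rfl⟩
      exact ⟨ht, t, rfl⟩
    · rintro ⟨hw, t, rfl⟩
      exact ⟨t, hw, rfl⟩
  have h2 := (hC z v hv (by
    obtain ⟨t, ht⟩ := hne
    exact ⟨_, ht, t, rfl⟩)).2
  rw [← himg] at h2
  have e := (line_isEmbedding z v hv).homeomorphImage {t : ℂ | z + t • v ∈ D}
  exact e.toHomotopyEquiv.simplyConnectedSpace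

theorem no_log_on_circle {R : ℝ} (hR : 0 < R) (l : ℂ → ℂ) (hl : ContinuousOn l (sphere 0 R))
    (he : ∀ c ∈ sphere (0:ℂ) R, Complex.exp (l c) = c⁻¹) : False := by
  set p : ℝ → ℂ := fun θ => R * Complex.exp (θ * Complex.I) with hp
  have hpm : ∀ θ, p θ ∈ sphere (0:ℂ) R := by
    intro θ
    simp [hp, Complex.norm_exp_ofReal_mul_I, abs_of_pos hR]
  have hpc : Continuous p := by fun_prop
  have hm : Continuous (fun θ => l (p θ)) := hl.comp_continuous hpc hpm
  have hu := log_unique (s := univ) isPreconnected_univ hm.continuousOn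
    (g := fun θ : ℝ => l (p 0) - θ * Complex.I) (by fun_prop) (by
      intro θ _
      rw [he _ (hpm θ), Complex.exp_sub, he _ (hpm 0)]
      simp only [hp, Complex.ofReal_zero, zero_mul, Complex.exp_zero, mul_one, mul_inv]
      rw [div_eq_mul_inv]) (a := 0) (mem_univ _) (by simp)
  have h1 := hu (mem_univ (2 * Real.pi))
  have h2 : p (2 * Real.pi) = p 0 := by
    simp [hp, Complex.exp_two_pi_mul_I]
  simp only [h2] at h1
  have : ((2 * Real.pi : ℝ) : ℂ) * Complex.I = 0 := by
    linear_combination h1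
  simp [Real.pi_ne_zero] at this

theorem weak_lineal_aux {D : Set E} (hD : IsOpen D) (hC : CConvex D) {ξ w n : E} (hξ : ξ ∉ D)
    (hw : ξ + w ∈ D)
    (hn : ∀ R : ℝ, 0 < R → ∃ t : ℝ, 0 < t ∧ ∀ c : ℂ, ‖c‖ = R → ξ + (t : ℂ) • (c • w - n) ∈ D) :
    False := by
  -- choose the radius
  obtain ⟨ε, hε, hb⟩ := Metric.isOpen_iff.mp hD _ hw
  obtain ⟨R, hR, hRn⟩ : ∃ R : ℝ, 0 < R ∧ ‖n‖ / R < ε := by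
    refine ⟨(‖n‖ + 1) / ε, by positivity, ?_⟩
    rw [div_div_eq_mul_div, div_lt_iff₀ (by positivity)]
    nlinarith
  obtain ⟨t₀, ht₀, htD⟩ := hn R hR
  set T : ℂ → Set ℂ := fun c => {t : ℂ | ξ + t • (c • w - n) ∈ D} with hT
  have hTo : ∀ c, IsOpen (T c) := fun c =>
    hD.preimage (by fun_prop : Continuous fun t : ℂ => ξ + t • (c • w - n))
  have hT0 : ∀ c, (0:ℂ) ∉ T c := fun c => by simpa [hT] using hξ
  have hTt : ∀ c ∈ sphere (0:ℂ) R, (t₀ : ℂ) ∈ T c := fun c hc => htD c (by simpa using hc)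
  have hTi : ∀ c ∈ sphere (0:ℂ) R, c⁻¹ ∈ T c := by
    intro c hc
    have hc' : ‖c‖ = R := by simpa using hc
    have hc0 : c ≠ 0 := by rintro rfl; simp at hc'; linarith
    apply hb
    rw [smul_sub, smul_smul, inv_mul_cancel₀ hc0, one_smul, mem_ball, dist_eq_norm]
    have : ξ + (w - c⁻¹ • n) - (ξ + w) = - (c⁻¹ • n) := by abel
    rw [this, norm_neg, norm_smul, norm_inv, hc', ← div_eq_inv_mul]
    exact hRn
  have hbranch : ∀ c : ℂ, ∃ f : ℂ → ℂ, c ∈ sphere (0:ℂ) R → ContinuousOn f (T c) ∧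
      (∀ t ∈ T c, Complex.exp (f t) = t) ∧ f t₀ = Complex.log t₀ := by
    intro c
    by_cases hc : c ∈ sphere (0:ℂ) R
    swap
    · exact ⟨id, fun h => absurd h hc⟩
    have hv : c • w - n ≠ 0 := by
      intro h
      have := hTt c hc
      simp only [hT, mem_ofPred_eq, h, smul_zero, add_zero] at this
      exact hξ this
    have hsc : IsSimplyConnected (T c) := slice_simplyConnected hC ξ _ hv ⟨_, hTt c hc⟩
    obtain ⟨f, hf1, hf2⟩ := Complex.exists_continuousOn_eqOn_exp_comp hsc (hTo c)
      (g := fun t => t) continuousOn_id (by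
        rintro ⟨t, ht, h0⟩
        simp only at h0
        rw [h0] at ht
        exact hT0 c ht)
    refine ⟨fun t => f t - (f t₀ - Complex.log t₀), fun _ => ⟨hf1.sub continuousOn_const, ?_, by ring⟩⟩
    intro t ht
    have e1 : Complex.exp (f t) = t := hf2 ht
    have e2 : Complex.exp (f t₀) = t₀ := hf2 (hTt c hc)
    have h0 : (t₀ : ℂ) ≠ 0 := by exact_mod_cast ht₀.ne'
    rw [Complex.exp_sub, Complex.exp_sub, e1, e2, Complex.exp_log h0, div_self h0, div_one]
  choose f hf using hbranch
  refine no_log_on_circle hR (fun c => f c c⁻¹) ?_ fun c hc => (hf c hc).2.1 _ (hTi c hc)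
  intro c₀ hc₀
  have hc' : ‖c₀‖ = R := by simpa using hc₀
  have hc0 : c₀ ≠ 0 := by rintro rfl; simp at hc'; linarith
  -- the compact connected set
  have hv : c₀ • w - n ≠ 0 := by
    intro h
    have := hTt c₀ hc₀
    simp only [hT, mem_ofPred_eq, h, smul_zero, add_zero] at this
    exact hξ this
  have hsc : IsSimplyConnected (T c₀) := slice_simplyConnected hC ξ _ hv ⟨_, hTt c₀ hc₀⟩
  obtain ⟨γ, hγ⟩ := hsc.isPathConnected.joinedIn _ (hTt c₀ hc₀) _ (hTi c₀ hc₀)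
  obtain ⟨η, hη, hηT⟩ := Metric.nhds_basis_closedBall.mem_iff.mp ((hTo c₀).mem_nhds (hTi c₀ hc₀))
  set K : Set ℂ := range γ ∪ closedBall c₀⁻¹ η with hK
  have hKc : IsCompact K := (isCompact_range γ.continuous).union (isCompact_closedBall _ _)
  have hKp : IsPreconnected K := by
    apply IsPreconnected.union c₀⁻¹
    · exact ⟨1, by simp⟩
    · exact mem_closedBall_self hη.le
    · exact isPreconnected_range γ.continuous
    · exact (convex_closedBall _ _).isPreconnected
  have hKT : K ⊆ T c₀ := by
    apply union_subset _ hηT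
    rintro _ ⟨s, rfl⟩
    exact hγ s
  have hO : IsOpen {p : ℂ × ℂ | ξ + p.2 • (p.1 • w - n) ∈ D} :=
    hD.preimage (by fun_prop : Continuous fun p : ℂ × ℂ => ξ + p.2 • (p.1 • w - n))
  obtain ⟨u, v, hu, -, hcu, hKv, huv⟩ := generalized_tube_lemma (isCompact_singleton (x := c₀)) hKc hO (by
    rintro ⟨c, t⟩ ⟨hc, ht⟩
    rw [mem_singleton_iff] at hc
    simp only at hc
    subst hc
    exact hKT ht)
  have htK : (t₀ : ℂ) ∈ K := Or.inl ⟨0, by simp⟩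
  have hloc : ∀ᶠ c in 𝓝[sphere (0:ℂ) R] c₀, f c c⁻¹ = f c₀ c⁻¹ := by
    have h1 : ∀ᶠ c in 𝓝[sphere (0:ℂ) R] c₀, c ∈ u :=
      nhdsWithin_le_nhds (hu.mem_nhds (hcu rfl))
    have h2 : ∀ᶠ c in 𝓝[sphere (0:ℂ) R] c₀, c⁻¹ ∈ closedBall c₀⁻¹ η :=
      nhdsWithin_le_nhds ((continuousAt_inv₀ hc0).eventually_mem (closedBall_mem_nhds _ hη))
    filter_upwards [h1, h2, self_mem_nhdsWithin] with c hcu h2 hcs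
    have hKTc : K ⊆ T c := fun t ht => huv (mk_mem_prod hcu (hKv ht))
    exact log_unique hKp ((hf c hcs).1.mono hKTc) ((hf c₀ hc₀).1.mono hKT)
      (fun t ht => by rw [(hf c hcs).2.1 t (hKTc ht), (hf c₀ hc₀).2.1 t (hKT ht)])
      htK (by rw [(hf c hcs).2.2, (hf c₀ hc₀).2.2]) (Or.inr h2)
  have hcont : ContinuousWithinAt (fun c => f c₀ c⁻¹) (sphere (0:ℂ) R) c₀ := by
    have h1 : ContinuousAt (f c₀) c₀⁻¹ := (hf c₀ hc₀).1.continuousAt ((hTo c₀).mem_nhds (hTi c₀ hc₀))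
    exact (ContinuousAt.comp (f := fun c : ℂ => c⁻¹) h1 (continuousAt_inv₀ hc0)).continuousWithinAt
  exact hcont.congr_of_eventuallyEq hloc rfl

end PartB

open Metric Set MeasureTheory Filter Topology

section PartC
set_option linter.unusedSectionVars false
variable {E : Type*} [NormedAddCommGroup E] [NormedSpace ℂ E]

theorem bdist_nonneg (D : Set E) (x : E) : 0 ≤ bdist D x := Metric.infDist_nonneg

theorem subset_of_disjoint_frontier {D t : Set E} (hD : IsOpen D) (ht : IsPreconnected t)
    (hne : (t ∩ D).Nonempty) (hdis : ∀ x ∈ t, x ∉ frontier D) : t ⊆ D := by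
  refine ht.subset_left_of_subset_union hD isClosed_closure.isOpen_compl
    (disjoint_compl_right.mono_left subset_closure) ?_ hne
  intro x hx
  by_cases h : x ∈ closure D
  · left
    by_contra h2
    exact hdis x hx ⟨h, by rwa [hD.interior_eq]⟩
  · exact Or.inr h

theorem ball_bdist_subset {D : Set E} (hD : IsOpen D) {x : E} (hx : x ∈ D) :
    ball x (bdist D x) ⊆ D := by
  by_cases h0 : bdist D x ≤ 0
  · rw [ball_eq_empty.2 h0]; exact empty_subset _
  push Not at h0
  refine subset_of_disjoint_frontier hD ?_ ⟨x, mem_ball_self h0, hx⟩ ?_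
  · let _ : NormedSpace ℝ E := NormedSpace.complexToReal
    exact (convex_ball x _).isPreconnected
  · intro y hy hf
    have := Metric.infDist_le_dist_of_mem (x := x) hf
    rw [mem_ball, dist_comm] at hy
    exact absurd hy (not_lt.2 this)

theorem frontier_notMem {D : Set E} (hD : IsOpen D) {x : E} (hx : x ∈ frontier D) : x ∉ D := by
  have := hx.2
  rwa [hD.interior_eq] at this

/-- uniform geometric data at a boundary point -/
def GeomAt (D : Set E) (r c M : ℝ) (ξ : E) : Prop :=
  ∃ (n : E) (L : E →L[ℂ] ℂ), ‖n‖ = 1 ∧ L n = 1 ∧ ‖L‖ ≤ M ∧ (∀ y ∈ D, L (y - ξ) ≠ 0) ∧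
    ∀ y ∈ D, dist y ξ < r → ∀ t : ℝ, 0 ≤ t → t ≤ r →
      ball (y - (t:ℂ) • n) (min (bdist D y) r + c * t) ⊆ D

theorem GeomAt.mono {D : Set E} {r c M r' c' M' : ℝ} {ξ : E} (h : GeomAt D r c M ξ)
    (hr : r' ≤ r) (hc : c' ≤ c) (hM : M ≤ M') : GeomAt D r' c' M' ξ := by
  obtain ⟨n, L, h1, h2, h3, h4, h5⟩ := h
  refine ⟨n, L, h1, h2, h3.trans hM, h4, fun y hy hyd t ht htr => ?_⟩
  refine (ball_subset_ball ?_).trans (h5 y hy (hyd.trans_le hr) t ht (htr.trans hr))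
  have := min_le_min_left (bdist D y) hr
  have := mul_le_mul_of_nonneg_right hc ht
  linarith

theorem smul_ball_split {p : E} {s ct : ℝ} (hs : 0 < s) (hct : 0 ≤ ct) {z : E}
    (hz : z ∈ ball p (s + ct)) : ∃ a b : E, z = p + a + b ∧ ‖a‖ < s ∧ ‖b‖ ≤ ct := by
  rw [mem_ball, dist_eq_norm] at hz
  have hpos : 0 < s + ct := by linarith
  refine ⟨((s/(s+ct) : ℝ) : ℂ) • (z - p), ((ct/(s+ct) : ℝ) : ℂ) • (z - p), ?_, ?_, ?_⟩
  · rw [add_assoc, ← add_smul, ← Complex.ofReal_add, ← add_div, div_self hpos.ne']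
    simp
  · rw [norm_smul, Complex.norm_real, Real.norm_of_nonneg (by positivity), div_mul_eq_mul_div,
      div_lt_iff₀ hpos]
    exact mul_lt_mul_of_pos_left hz hs
  · rw [norm_smul, Complex.norm_real, Real.norm_of_nonneg (by positivity), div_mul_eq_mul_div,
      div_le_iff₀ hpos]
    exact mul_le_mul_of_nonneg_left hz.le hct

theorem local_geom [ProperSpace E] {D W : Set E} {ρ : E → ℝ} {ξ₀ : E} (hD : IsOpen D) (hC : CConvex D)
    (h : IsLocalDefiningFn D ξ₀ W ρ) : ∃ r c M : ℝ, 0 < r ∧ 0 < c ∧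
      ∀ ξ ∈ frontier D, dist ξ ξ₀ < r → GeomAt D r c M ξ := by
  obtain ⟨hW, hξW, hρ, hdρ, hDW, hfW⟩ := h
  set F := fderiv ℝ ρ ξ₀ with hF
  have hFne : F ≠ 0 := hdρ ξ₀ hξW
  obtain ⟨n, hn1, hn2⟩ : ∃ n : E, ‖n‖ = 1 ∧ 0 < F n := by
    obtain ⟨v, hv⟩ : ∃ v, F v ≠ 0 := by
      by_contra hcon
      push Not at hcon
      exact hFne (by ext v; simpa using hcon v)
    have hv0 : v ≠ 0 := by rintro rfl; simp at hv
    have hvn : 0 < ‖v‖ := norm_pos_iff.2 hv0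
    refine ⟨(SignType.sign (F v) * ‖v‖⁻¹ : ℝ) • v, ?_, ?_⟩
    · rw [norm_smul, norm_mul, norm_inv, norm_norm]
      have : ‖((SignType.sign (F v) : SignType) : ℝ)‖ = 1 := by
        rcases lt_or_gt_of_ne hv with h | h
        · simp [sign_neg h]
        · simp [sign_pos h]
      rw [this, one_mul, inv_mul_cancel₀ hvn.ne']
    · rw [map_smul, smul_eq_mul, mul_right_comm]
      apply mul_pos _ (inv_pos.2 hvn)
      rw [sign_mul_self]
      exact abs_pos.2 hv
  obtain ⟨m, hm⟩ : ∃ m, m = F n / 4 := ⟨_, rfl⟩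
  have hm0 : 0 < m := by rw [hm]; positivity
  have hFn : F n = 4 * m := by rw [hm]; ring
  have hcont : ContinuousOn (fderiv ℝ ρ) W := hρ.continuousOn_fderiv_of_isOpen hW le_rfl
  have hdiff : ∀ x ∈ W, DifferentiableAt ℝ ρ x := fun x hx =>
    (hρ.contDiffAt (hW.mem_nhds hx)).differentiableAt (by norm_num)
  have hnear : ∀ᶠ z in 𝓝 ξ₀, z ∈ W ∧ ‖fderiv ℝ ρ z - F‖ ≤ m := by
    refine Filter.Eventually.and (hW.mem_nhds hξW) ?_
    have := (hcont.continuousAt (hW.mem_nhds hξW)).tendsto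
    have := this.eventually (Metric.closedBall_mem_nhds _ hm0)
    filter_upwards [this] with z hz
    simpa [dist_eq_norm] using hz
  obtain ⟨r5, hr5, hball⟩ := Metric.eventually_nhds_iff_ball.1 hnear
  obtain ⟨r, hr⟩ : ∃ r, r = r5 / 5 := ⟨_, rfl⟩
  have hr0 : 0 < r := by rw [hr]; positivity
  have hr55 : r5 = 5 * r := by rw [hr]; ring
  subst hr55
  clear hr
  set B := ‖F‖ + m with hB
  have hFle : 4 * m ≤ ‖F‖ := by
    rw [← hFn]; simpa [hn1] using (le_abs_self _).trans (F.le_opNorm n)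
  have hB0 : 0 < B := by positivity
  have hmv : ∀ x ∈ ball ξ₀ (5*r), ∀ y ∈ ball ξ₀ (5*r), |ρ y - ρ x - F (y - x)| ≤ m * ‖y - x‖ := by
    intro x hx y hy
    exact (convex_ball ξ₀ (5*r)).norm_image_sub_le_of_norm_fderiv_le' (fun z hz => hdiff z (hball z hz).1)
      (fun z hz => (hball z hz).2) hx hy
  refine ⟨r, m / B, 2 * B / (3 * m), hr0, by positivity, fun ξ hξ hξd => ?_⟩
  have hξb : ξ ∈ ball ξ₀ (5*r) := by rw [mem_ball]; linarith
  set G := fderiv ℝ ρ ξ with hG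
  have hGF : ‖G - F‖ ≤ m := (hball ξ hξb).2
  have hGB : ‖G‖ ≤ B := by
    have := norm_add_le (G - F) F
    rw [sub_add_cancel] at this; linarith
  have hGn : 3 * m ≤ G n := by
    have h1 := (G - F).le_opNorm n
    rw [hn1, mul_one, _root_.sub_apply, Real.norm_eq_abs] at h1
    have := neg_abs_le (G n - F n)
    linarith
  set L₀ : E →L[ℂ] ℂ := StrongDual.extendRCLike (𝕜 := ℂ) G with hL₀
  have hre : ∀ x, (L₀ x).re = G x := fun x => StrongDual.re_extendRCLike_apply (𝕜 := ℂ) G x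
  have hLap : ∀ x, L₀ x = (G x : ℂ) - Complex.I * (G (Complex.I • x) : ℂ) := fun x =>
    StrongDual.extendRCLike_apply (𝕜 := ℂ) G x
  have hLn : 3 * m ≤ ‖L₀ n‖ := by
    have := Complex.re_le_norm (L₀ n); rw [hre] at this; linarith
  have hLn0 : L₀ n ≠ 0 := by rw [← norm_pos_iff]; linarith
  have hLnorm : ‖L₀‖ ≤ 2 * B := by
    apply ContinuousLinearMap.opNorm_le_bound _ (by positivity)
    intro x
    rw [hLap]
    have h1 := G.le_opNorm x
    have h2 := G.le_opNorm (Complex.I • x)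
    rw [norm_smul, Complex.norm_I, one_mul] at h2
    have h3 : ‖(G x : ℂ) - Complex.I * (G (Complex.I • x) : ℂ)‖ ≤ ‖G x‖ + ‖G (Complex.I • x)‖ := by
      refine (norm_sub_le _ _).trans ?_
      simp
    have h4 := mul_le_mul_of_nonneg_right hGB (norm_nonneg x)
    linarith
  refine ⟨n, (L₀ n)⁻¹ • L₀, hn1, by simp [hLn0], ?_, ?_, ?_⟩
  · rw [norm_smul, norm_inv, inv_mul_eq_div]
    gcongr
  · intro y hy hL
    have hL' : L₀ (y - ξ) = 0 := by
      simpa [hLn0] using hL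
    refine weak_lineal_aux hD hC (ξ := ξ) (w := y - ξ) (n := n) (frontier_notMem hD hξ)
      (by simpa using hy) ?_
    intro R hR
    have hρξ : ρ ξ = 0 := by
      have : ξ ∈ frontier D ∩ W := ⟨hξ, (hball ξ hξb).1⟩
      rw [hfW] at this
      exact this.2
    set Q := R * ‖y - ξ‖ + 1 with hQ
    have hQ0 : 0 < Q := by positivity
    have hlo := (hdiff ξ (hball ξ hξb).1).hasFDerivAt.isLittleO.def (c := m / Q) (by positivity)
    have hev : ∀ᶠ x in 𝓝 ξ, x ∈ W ∧ ‖ρ x - ρ ξ - G (x - ξ)‖ ≤ m / Q * ‖x - ξ‖ :=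
      Filter.Eventually.and (hW.mem_nhds (hball ξ hξb).1) hlo
    obtain ⟨s, hs, hsb⟩ := Metric.eventually_nhds_iff_ball.1 hev
    refine ⟨s / (2 * Q), by positivity, fun c hc => ?_⟩
    set t := s / (2 * Q) with ht
    have ht0 : 0 < t := by positivity
    set d := c • (y - ξ) - n with hd
    have hdn : ‖d‖ ≤ Q := by
      refine (norm_sub_le _ _).trans ?_
      rw [norm_smul, hc, hn1]
    have htd : ‖(t : ℂ) • d‖ ≤ t * Q := by
      rw [norm_smul, Complex.norm_real, Real.norm_of_nonneg ht0.le]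
      gcongr
    have htQ : t * Q < s := by
      rw [ht]; field_simp; linarith
    have hmem : ξ + (t : ℂ) • d ∈ ball ξ s := by
      rw [mem_ball, dist_eq_norm, add_sub_cancel_left]; linarith
    obtain ⟨hxW, hx⟩ := hsb _ hmem
    have : ξ + (t : ℂ) • d ∈ D ∩ W := by
      rw [hDW]
      refine ⟨hxW, ?_⟩
      rw [add_sub_cancel_left, hρξ, sub_zero] at hx
      have hGd : G ((t:ℂ) • d) = - t * G n := by
        rw [← hre, map_smul, hd, map_sub, map_smul, hL']
        simp [hre]
      rw [hGd] at hx
      have h1 := (le_abs_self _).trans hx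
      have h2 : m / Q * ‖(t:ℂ) • d‖ ≤ m / Q * (t * Q) := by gcongr
      have h3 : m / Q * (t * Q) = m * t := by field_simp
      have h4 : t * (3 * m) ≤ t * G n := by gcongr
      nlinarith [mul_pos ht0 hm0]
    exact this.1
  · intro y hy hyd t ht htr z hz
    have hbp : 0 < bdist D y ∨ bdist D y ≤ 0 := lt_or_ge _ _
    have hc0 : 0 < m / B := by positivity
    have hc1 : m / B ≤ 1/4 := by rw [div_le_iff₀ hB0]; linarith
    have hyb : dist y ξ₀ < 2 * r := by have := dist_triangle y ξ ξ₀; linarith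
    -- key
    have key : ∀ y' ∈ D, dist y' ξ₀ < 3 * r → ∀ b : E, ‖b‖ ≤ m / B * t → y' - (t:ℂ) • n + b ∈ D := by
      intro y' hy' hy'd b hbn
      have htn : ‖(t:ℂ) • n‖ = t := by
        rw [norm_smul, hn1, Complex.norm_real, Real.norm_of_nonneg ht, mul_one]
      have hbt : ‖b‖ ≤ 1/4 * t := hbn.trans (by gcongr)
      have hdisp : ‖(y' - (t:ℂ) • n + b) - y'‖ ≤ 5/4 * t := by
        have : (y' - (t:ℂ) • n + b) - y' = b - (t:ℂ) • n := by abel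
        rw [this]
        refine (norm_sub_le _ _).trans ?_
        rw [htn]; linarith
      have hy'b : y' ∈ ball ξ₀ (5*r) := by rw [mem_ball]; linarith
      have hzb : y' - (t:ℂ) • n + b ∈ ball ξ₀ (5*r) := by
        rw [mem_ball]
        have := dist_triangle (y' - (t:ℂ) • n + b) y' ξ₀
        rw [← dist_eq_norm] at hdisp
        linarith
      have h1 := hmv _ hy'b _ hzb
      have h2 : F (y' - (t:ℂ) • n + b - y') = - t * (4 * m) + F b := by
        have : (y' - (t:ℂ) • n + b) - y' = b - t • n := by
          rw [Complex.coe_smul]; abel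
        rw [this, map_sub, map_smul, hFn, smul_eq_mul]; ring
      have h3 : F b ≤ m * t := by
        have h31 := (le_abs_self _).trans (F.le_opNorm b)
        have : ‖F‖ * ‖b‖ ≤ B * (m / B * t) := by
          gcongr
          rw [hB]; linarith
        have h32 : B * (m / B * t) = m * t := by field_simp
        linarith
      have h4 : ρ y' < 0 := by
        have : y' ∈ D ∩ W := ⟨hy', (hball y' hy'b).1⟩
        rw [hDW] at this; exact this.2
      have h5 := (abs_le.1 h1).2
      have h6 : m * ‖y' - (t:ℂ) • n + b - y'‖ ≤ m * (5/4 * t) := by gcongr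
      have : y' - (t:ℂ) • n + b ∈ D ∩ W := by
        rw [hDW]
        refine ⟨(hball _ hzb).1, ?_⟩
        rw [h2] at h5
        nlinarith [mul_nonneg hm0.le ht]
      exact this.1
    rcases hbp with hbp | hbp
    · obtain ⟨a, b, rfl, ha, hb⟩ := smul_ball_split (lt_min hbp hr0) (by positivity) hz
      have : y - (t:ℂ) • n + a + b = (y + a) - (t:ℂ) • n + b := by abel
      rw [this]
      apply key
      · apply ball_bdist_subset hD hy
        rw [mem_ball, dist_eq_norm, add_sub_cancel_left]
        exact ha.trans_le (min_le_left _ _)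
      · have h1 : dist (y + a) y < r := by
          rw [dist_eq_norm, add_sub_cancel_left]; exact ha.trans_le (min_le_right _ _)
        have := dist_triangle (y + a) y ξ₀
        linarith
      · exact hb
    · have : z = y - (t:ℂ) • n + (z - (y - (t:ℂ) • n)) := by abel
      rw [this]
      apply key _ hy (by linarith)
      rw [mem_ball, dist_eq_norm] at hz
      have := min_le_left (bdist D y) r
      linarith

theorem global_geom [ProperSpace E] {D : Set E} (hD : IsOpen D) (hb : Bornology.IsBounded D)
    (hC : CConvex D)
    (h : ∀ ξ ∈ frontier D, ∃ W ρ, IsLocalDefiningFn D ξ W ρ) :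
    ∃ r c M : ℝ, 0 < r ∧ r ≤ 1 ∧ 0 < c ∧ c ≤ 1 ∧ 1 ≤ M ∧ ∀ ξ ∈ frontier D, GeomAt D r c M ξ := by
  have hcomp : IsCompact (frontier D) :=
    Metric.isCompact_of_isClosed_isBounded isClosed_frontier (hb.closure.subset frontier_subset_closure)
  have : ∃ r c M : ℝ, 0 < r ∧ 0 < c ∧ ∀ ξ ∈ frontier D, ξ ∈ frontier D → GeomAt D r c M ξ := by
    refine hcomp.induction_on (p := fun s => ∃ r c M : ℝ, 0 < r ∧ 0 < c ∧
      ∀ ξ ∈ s, ξ ∈ frontier D → GeomAt D r c M ξ) ⟨1, 1, 1, one_pos, one_pos, by simp⟩ ?_ ?_ ?_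
    · rintro s t hst ⟨r, c, M, h1, h2, h3⟩
      exact ⟨r, c, M, h1, h2, fun ξ hξ => h3 ξ (hst hξ)⟩
    · rintro s t ⟨r, c, M, h1, h2, h3⟩ ⟨r', c', M', h1', h2', h3'⟩
      refine ⟨min r r', min c c', max M M', lt_min h1 h1', lt_min h2 h2', ?_⟩
      rintro ξ (hξ | hξ) hf
      · exact (h3 ξ hξ hf).mono (min_le_left _ _) (min_le_left _ _) (le_max_left _ _)
      · exact (h3' ξ hξ hf).mono (min_le_right _ _) (min_le_right _ _) (le_max_right _ _)
    · intro ξ₀ hξ₀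
      obtain ⟨W, ρ, hWρ⟩ := h ξ₀ hξ₀
      obtain ⟨r, c, M, hr, hc, hG⟩ := local_geom hD hC hWρ
      exact ⟨ball ξ₀ r, mem_nhdsWithin_of_mem_nhds (ball_mem_nhds _ hr), r, c, M, hr, hc,
        fun ξ hξ hf => hG ξ hf hξ⟩
  obtain ⟨r, c, M, hr, hc, hG⟩ := this
  exact ⟨min r 1, min c 1, max M 1, lt_min hr one_pos, min_le_right _ _, lt_min hc one_pos,
    min_le_right _ _, le_max_right _ _,
    fun ξ hξ => (hG ξ hξ hξ).mono (min_le_left _ _) (min_le_left _ _) (le_max_left _ _)⟩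
end PartC

open Metric Set MeasureTheory Filter Topology

section PartC2
set_option linter.unusedSectionVars false
variable {E : Type*} [NormedAddCommGroup E] [NormedSpace ℂ E]

/-- standing geometric assumptions on a domain -/
structure GeomDom (D : Set E) (r c M : ℝ) : Prop where
  isOpen : IsOpen D
  nonempty : D.Nonempty
  bdd : Bornology.IsBounded D
  conn : IsPreconnected D
  fne : (frontier D).Nonempty
  hr : 0 < r
  hr1 : r ≤ 1
  hc : 0 < c
  hc1 : c ≤ 1
  hM : 1 ≤ M
  geom : ∀ ξ ∈ frontier D, GeomAt D r c M ξ

theorem exists_geomDom [ProperSpace E] [Nontrivial E] {D : Set E} (hD : IsOpen D) (hne : D.Nonempty)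
    (hb : Bornology.IsBounded D) (hC : CConvex D)
    (h : ∀ ξ ∈ frontier D, ∃ W ρ, IsLocalDefiningFn D ξ W ρ) :
    ∃ r c M : ℝ, GeomDom D r c M := by
  obtain ⟨r, c, M, h1, h2, h3, h4, h5, h6⟩ := global_geom hD hb hC h
  refine ⟨r, c, M, hD, hne, hb, ?_, ?_, h1, h2, h3, h4, h5, h6⟩
  · apply isPreconnected_of_forall_pair
    intro x hx y hy
    by_cases hxy : y = x
    · subst hxy
      exact ⟨{y}, by simpa using hx, by simp, by simp, isPreconnected_singleton⟩
    · have hx' : x ∈ D ∩ {w | ∃ c : ℂ, w = x + c • (y - x)} := ⟨hx, 0, by simp⟩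
      have hy' : y ∈ D ∩ {w | ∃ c : ℂ, w = x + c • (y - x)} := ⟨hy, 1, by simp⟩
      exact ⟨_, inter_subset_left, hx', hy',
        (hC x (y - x) (sub_ne_zero.2 hxy) ⟨x, hx'⟩).1.isPreconnected⟩
  · rw [nonempty_frontier_iff]
    refine ⟨hne, ?_⟩
    rintro rfl
    exact NormedSpace.unbounded_univ ℂ E hb

variable {D : Set E} {r c M : ℝ}

theorem GeomDom.bdist_pos (h : GeomDom D r c M) {x : E} (hx : x ∈ D) : 0 < bdist D x :=
  (isClosed_frontier.notMem_iff_infDist_pos h.fne).1 fun hf => frontier_notMem h.isOpen hf hx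

theorem GeomDom.nearest [ProperSpace E] (h : GeomDom D r c M) (x : E) :
    ∃ ξ ∈ frontier D, bdist D x = dist x ξ :=
  isClosed_frontier.exists_infDist_eq_dist h.fne x

theorem le_bdist_of_ball (hD : IsOpen D) (hfne : (frontier D).Nonempty) {x : E} {s : ℝ}
    (hb : ball x s ⊆ D) : s ≤ bdist D x := by
  refine (Metric.le_infDist hfne).2 fun y hy => ?_
  by_contra hlt
  push Not at hlt
  exact frontier_notMem hD hy (hb (by rwa [mem_ball, dist_comm]))

theorem bdist_le_L (hD : IsOpen D) {n ξ : E} {L : E →L[ℂ] ℂ} (hn : ‖n‖ = 1) (hL : L n = 1)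
    (hne : ∀ y ∈ D, L (y - ξ) ≠ 0) {y : E} (hy : y ∈ D) : bdist D y ≤ ‖L (y - ξ)‖ := by
  by_contra hlt
  push Not at hlt
  have : y - L (y - ξ) • n ∈ D := by
    apply ball_bdist_subset hD hy
    rw [mem_ball, dist_eq_norm, sub_sub_cancel_left, norm_neg, norm_smul, hn, mul_one]
    exact hlt
  apply hne _ this
  rw [sub_right_comm, map_sub, map_smul, hL, smul_eq_mul, mul_one, sub_self]

theorem GeomDom.geomL (h : GeomDom D r c M) {ξ : E} (hξ : ξ ∈ frontier D) :
    ∃ (L : E →L[ℂ] ℂ), ‖L‖ ≤ M ∧ L ≠ 0 ∧ (∀ y ∈ D, L (y - ξ) ≠ 0) ∧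
      (∀ y ∈ D, bdist D y ≤ ‖L (y - ξ)‖) ∧
      ∀ y ∈ D, dist y ξ < r / M → - L (y - ξ) ∈ Complex.slitPlane := by
  obtain ⟨n, L, hn, hL, hLM, hne, hcone⟩ := h.geom ξ hξ
  have hM0 : 0 < M := by linarith [h.hM]
  refine ⟨L, hLM, by rintro rfl; simp at hL, hne, fun y hy => bdist_le_L h.isOpen hn hL hne hy, ?_⟩
  intro y hy hyd
  rw [Complex.mem_slitPlane_iff]
  by_contra hcon
  push Not at hcon
  obtain ⟨h1, h2⟩ := hcon
  rw [Complex.neg_re] at h1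
  rw [Complex.neg_im, neg_eq_zero] at h2
  have hLr : L (y - ξ) = ((L (y - ξ)).re : ℂ) := by
    apply Complex.ext
    · simp only [Complex.ofReal_re]
    · rw [h2, Complex.ofReal_im]
  have hle : ‖L (y - ξ)‖ ≤ r := by
    refine (L.le_opNorm _).trans ?_
    rw [← dist_eq_norm]
    calc ‖L‖ * dist y ξ ≤ M * (r / M) := by gcongr
      _ = r := by field_simp
  have hlr : (L (y - ξ)).re ≤ r := (Complex.re_le_norm _).trans hle
  have hyr : dist y ξ < r := hyd.trans_le (div_le_self h.hr.le h.hM)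
  have hpos : 0 ≤ (L (y - ξ)).re := by linarith
  have hb0 := h.bdist_pos hy
  have hmem := hcone y hy hyr (L (y - ξ)).re hpos hlr (mem_ball_self (by
    have := lt_min hb0 h.hr
    have := mul_nonneg h.hc.le hpos
    linarith))
  apply hne _ hmem
  rw [sub_right_comm, map_sub, map_smul, hL, smul_eq_mul, mul_one]
  rw [sub_eq_zero]; exact hLr

/-- the logarithmic depth -/
noncomputable def lam (D : Set E) (x : E) : ℝ := max 1 (- Real.log (bdist D x))

theorem one_le_lam (D : Set E) (x : E) : 1 ≤ lam D x := le_max_left _ _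

theorem HasCurve.refl [ProperSpace E] (hD : IsOpen D) {x : E} (hx : x ∈ D) : HasCurve D x x 0 := by
  obtain ⟨s, hs, hsb⟩ := Metric.isOpen_iff.1 hD x hx
  have := HasCurve.segment hD (x := x) (w := 0) (T := 0) le_rfl (fun _ => s) continuousOn_const
    (fun _ _ => hs) (by simpa using hsb)
  simpa using this

theorem HasCurve.of_ball [ProperSpace E] (hD : IsOpen D) {x y : E} {s : ℝ} (hs : 0 < s)
    (hb : ball x (2 * s) ⊆ D) (hy : dist y x ≤ s) : HasCurve D x y 1 := by
  have := HasCurve.segment hD (x := x) (w := y - x) (T := 1) zero_le_one (fun _ => s) continuousOn_const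
    (fun _ _ => hs) (by
      intro t ht
      refine (ball_subset_ball' ?_).trans hb
      rw [dist_eq_norm, add_sub_cancel_left, norm_smul, Real.norm_of_nonneg ht.1, ← dist_eq_norm]
      have : t * dist y x ≤ 1 * s := mul_le_mul ht.2 hy dist_nonneg zero_le_one
      linarith)
  simp only [one_smul, add_sub_cancel] at this
  refine this.mono_right ?_
  simp only [intervalIntegral.integral_const, sub_zero, one_smul]
  rw [div_le_one hs, ← dist_eq_norm]; exact hy

theorem GeomDom.exists_curve [ProperSpace E] (h : GeomDom D r c M) {x y : E} (hx : x ∈ D) (hy : y ∈ D) :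
    ∃ B, HasCurve D x y B := by
  refine h.conn.induction₂ (fun x y => ∃ B, HasCurve D x y B) ?_ ?_ ?_ hx hy
  · intro x hx
    obtain ⟨s, hs, hsb⟩ := Metric.isOpen_iff.1 h.isOpen x hx
    apply mem_nhdsWithin_of_mem_nhds
    filter_upwards [Metric.closedBall_mem_nhds x (half_pos hs)] with y hy
    exact ⟨1, HasCurve.of_ball h.isOpen (half_pos hs) (by rwa [mul_div_cancel₀ _ two_ne_zero]) hy⟩
  · rintro x y z - - - ⟨B, hB⟩ ⟨B', hB'⟩
    exact ⟨_, hB.trans h.isOpen hB'⟩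
  · rintro x y - - ⟨B, hB⟩
    exact ⟨B, hB.symm⟩

theorem GeomDom.compact_curve [ProperSpace E] (h : GeomDom D r c M) {s : ℝ} (hs : 0 < s) :
    ∃ B, 0 ≤ B ∧ ∀ x ∈ D, ∀ y ∈ D, s ≤ bdist D x → s ≤ bdist D y → HasCurve D x y B := by
  obtain ⟨o, ho⟩ := h.nonempty
  set K : Set E := closure D ∩ {x | s ≤ bdist D x} with hK
  have hKD : ∀ x ∈ K, x ∈ D := by
    rintro x ⟨h1, h2⟩
    by_contra h3
    have : x ∈ frontier D := ⟨h1, by rwa [h.isOpen.interior_eq]⟩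
    have : bdist D x = 0 := Metric.infDist_zero_of_mem this
    have h2' : s ≤ bdist D x := h2
    linarith
  have hKc : IsCompact K := by
    apply Metric.isCompact_of_isClosed_isBounded
    · exact isClosed_closure.inter (isClosed_le continuous_const (Metric.continuous_infDist_pt _))
    · exact h.bdd.closure.subset inter_subset_left
  have : ∃ B, 0 ≤ B ∧ ∀ z ∈ K, z ∈ K → HasCurve D o z B := by
    refine hKc.induction_on (p := fun s => ∃ B, 0 ≤ B ∧ ∀ z ∈ s, z ∈ K → HasCurve D o z B)
      ⟨0, le_rfl, by simp⟩ ?_ ?_ ?_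
    · rintro s t hst ⟨B, hB, h1⟩
      exact ⟨B, hB, fun z hz => h1 z (hst hz)⟩
    · rintro s t ⟨B, hB, h1⟩ ⟨B', hB', h1'⟩
      refine ⟨B + B', by positivity, ?_⟩
      rintro z (hz | hz) hzK
      · exact (h1 z hz hzK).mono_right (by linarith)
      · exact (h1' z hz hzK).mono_right (by linarith)
    · intro x hx
      obtain ⟨s, hs, hsb⟩ := Metric.isOpen_iff.1 h.isOpen x (hKD x hx)
      obtain ⟨B, hB⟩ := h.exists_curve ho (hKD x hx)
      refine ⟨_, mem_nhdsWithin_of_mem_nhds (Metric.closedBall_mem_nhds x (half_pos hs)),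
        max 0 (B + 1), le_max_left _ _, fun y hy _ => ?_⟩
      exact (hB.trans h.isOpen (HasCurve.of_ball h.isOpen (half_pos hs)
        (by rwa [mul_div_cancel₀ _ two_ne_zero]) hy)).mono_right (le_max_right _ _)
  obtain ⟨B, hB, hB2⟩ := this
  refine ⟨B + B, by positivity, fun x hx y hy hxs hys => ?_⟩
  have hxK : x ∈ K := ⟨subset_closure hx, hxs⟩
  have hyK : y ∈ K := ⟨subset_closure hy, hys⟩
  exact (hB2 x hxK hxK).symm.trans h.isOpen (hB2 y hyK hyK)

theorem integral_cone {δ c T : ℝ} (hδ : 0 < δ) (hc : 0 < c) (hT : 0 ≤ T) :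
    ∫ t in (0:ℝ)..T, 1 / (δ + c * t) = (Real.log (δ + c * T) - Real.log δ) / c := by
  have hpos : ∀ t ∈ uIcc 0 T, 0 < δ + c * t := by
    intro t ht
    rw [uIcc_of_le hT] at ht
    have := mul_nonneg hc.le ht.1
    linarith
  rw [intervalIntegral.integral_eq_sub_of_hasDerivAt (f := fun t => Real.log (δ + c * t) / c)]
  · simp [sub_div]
  · intro t ht
    have h1 : HasDerivAt (fun t => δ + c * t) c t := by
      simpa using ((hasDerivAt_id t).const_mul c).const_add δ
    have := (h1.log (hpos t ht).ne').div_const c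
    have e : c / (δ + c * t) / c = 1 / (δ + c * t) := by
      rw [div_div, mul_comm, div_mul_eq_div_div, div_self hc.ne']
    rw [e] at this
    exact this
  · apply ContinuousOn.intervalIntegrable
    exact continuousOn_const.div (by fun_prop) fun t ht => (hpos t ht).ne'

theorem GeomDom.to_core [ProperSpace E] (h : GeomDom D r c M) {x : E} (hx : x ∈ D) :
    ∃ z ∈ D, c * r ≤ bdist D z ∧ HasCurve D x z (2 / c * lam D x) := by
  have hl := one_le_lam D x
  have hc := h.hc
  have hr := h.hr
  rcases le_or_gt r (bdist D x) with hb | hb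
  · refine ⟨x, hx, ?_, (HasCurve.refl h.isOpen hx).mono_right (by positivity)⟩
    have := mul_le_mul_of_nonneg_right h.hc1 h.hr.le
    linarith
  · obtain ⟨ξ, hξ, hξd⟩ := h.nearest x
    obtain ⟨n, L, hn, hL, hLM, hne, hcone⟩ := h.geom ξ hξ
    have hδ := h.bdist_pos hx
    have hbt : ∀ t ∈ Icc 0 r, ball (x + t • (-n)) (bdist D x + c * t) ⊆ D := by
      intro t ht
      have := hcone x hx (by linarith) t ht.1 ht.2
      rwa [min_eq_left hb.le, Complex.coe_smul, sub_eq_add_neg, ← smul_neg] at this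
    have hpos : ∀ t ∈ Icc 0 r, 0 < bdist D x + c * t := fun t ht => by
      have := mul_nonneg h.hc.le ht.1; linarith
    have hseg := HasCurve.segment h.isOpen h.hr.le (fun t => bdist D x + c * t) (by fun_prop) hpos hbt
    have hend := hbt r ⟨h.hr.le, le_rfl⟩
    refine ⟨x + r • (-n), hend (mem_ball_self (hpos r ⟨h.hr.le, le_rfl⟩)), ?_, hseg.mono_right ?_⟩
    · have := le_bdist_of_ball h.isOpen h.fne hend
      linarith
    · rw [norm_neg, hn, integral_cone hδ h.hc h.hr.le]
      have h1 : Real.log (bdist D x + c * r) ≤ 1 := by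
        have h2 : c * r ≤ 1 := by nlinarith [h.hc1, h.hr1]
        have := Real.log_le_sub_one_of_pos (x := bdist D x + c * r) (by positivity)
        linarith [h.hr1]
      have h2 : - Real.log (bdist D x) ≤ lam D x := le_max_right _ _
      rw [div_mul_eq_mul_div]
      gcongr
      linarith

theorem GeomDom.upper [ProperSpace E] (h : GeomDom D r c M) :
    ∃ A, 0 < A ∧ ∀ x ∈ D, ∀ y ∈ D, HasCurve D x y (A * (lam D x + lam D y)) := by
  have hc := h.hc
  obtain ⟨B, hB, hB2⟩ := h.compact_curve (mul_pos h.hc h.hr)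
  refine ⟨2 / c + B, by positivity, fun x hx y hy => ?_⟩
  obtain ⟨z, hz, hz1, hz2⟩ := h.to_core hx
  obtain ⟨w, hw, hw1, hw2⟩ := h.to_core hy
  refine ((hz2.trans h.isOpen (hB2 z hz w hw hz1 hw1)).trans h.isOpen hw2.symm).mono_right ?_
  have := one_le_lam D x
  have := one_le_lam D y
  nlinarith
end PartC2

open Metric Set MeasureTheory Filter Topology

section PartD
set_option linter.unusedSectionVars false

theorem halfplane_schwarz {h : ℂ → ℂ} {R : ℝ} (hR : 0 < R) (hd : DifferentiableOn ℂ h (ball 0 R))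
    (hre : ∀ z ∈ ball (0:ℂ) R, 0 < (h z).re) : ‖deriv h 0‖ ≤ 2 / R * ‖h 0‖ := by
  have h00 : (0:ℂ) ∈ ball (0:ℂ) R := mem_ball_self hR
  set a := h 0 with ha
  have ha0 : 0 < a.re := hre 0 h00
  have hden : ∀ z ∈ ball (0:ℂ) R, h z + (starRingEnd ℂ) a ≠ 0 := by
    intro z hz h0
    have := congrArg Complex.re h0
    simp at this
    linarith [hre z hz]
  set φ : ℂ → ℂ := fun z => (h z - a) / (h z + (starRingEnd ℂ) a) with hφ
  have hφ0 : φ 0 = 0 := by simp [hφ, ← ha]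
  have hφd : DifferentiableOn ℂ φ (ball 0 R) :=
    (hd.sub (differentiableOn_const _)).div (hd.add (differentiableOn_const _)) hden
  have hmaps : MapsTo φ (ball 0 R) (closedBall (φ 0) 1) := by
    intro z hz
    rw [hφ0, mem_closedBall, dist_zero_right, hφ]
    simp only
    rw [norm_div, div_le_one (norm_pos_iff.2 (hden z hz))]
    rw [← sq_le_sq₀ (norm_nonneg _) (norm_nonneg _), ← Complex.normSq_eq_norm_sq,
      ← Complex.normSq_eq_norm_sq, Complex.normSq_apply, Complex.normSq_apply]
    simp
    nlinarith [mul_pos (hre z hz) ha0]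
  have hS := Complex.norm_deriv_le_div_of_mapsTo_ball hφd hmaps hR
  have hhd : HasDerivAt h (deriv h 0) 0 :=
    (hd.differentiableAt (isOpen_ball.mem_nhds h00)).hasDerivAt
  have hder : HasDerivAt φ (deriv h 0 / (2 * a.re)) 0 := by
    have h1 := (hhd.sub_const a).div (hhd.add_const ((starRingEnd ℂ) a)) (hden 0 h00)
    have h2 : h 0 + (starRingEnd ℂ) a = 2 * a.re := by
      rw [← ha]; exact Complex.add_conj a |>.trans (by push_cast; ring)
    have h3 : (2 * (a.re : ℂ)) ≠ 0 := by
      rw [← h2]; exact hden 0 h00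
    rw [h2] at h1
    have e : (deriv h 0 * (2 * (a.re : ℂ)) - (h 0 - a) * deriv h 0) / (2 * (a.re : ℂ)) ^ 2
        = deriv h 0 / (2 * a.re) := by
      rw [← ha, sub_self, zero_mul, sub_zero, sq, mul_div_mul_right _ _ h3]
    rw [e] at h1
    exact h1
  rw [hder.deriv, norm_div] at hS
  have h4 : ‖(2 * (a.re : ℂ))‖ = 2 * a.re := by
    rw [norm_mul, Complex.norm_real, Real.norm_of_nonneg ha0.le]; simp
  rw [h4, div_le_iff₀ (by positivity)] at hS
  refine hS.trans ?_
  have := Complex.re_le_norm a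
  calc 1 / R * (2 * a.re) ≤ 1 / R * (2 * ‖a‖) := by gcongr
    _ = 2 / R * ‖a‖ := by ring

theorem slit_schwarz {g : ℂ → ℂ} {R : ℝ} (hR : 0 < R) (hd : DifferentiableOn ℂ g (ball 0 R))
    (hm : ∀ z ∈ ball (0:ℂ) R, g z ∈ Complex.slitPlane) : ‖deriv g 0‖ ≤ 4 / R * ‖g 0‖ := by
  have h00 : (0:ℂ) ∈ ball (0:ℂ) R := mem_ball_self hR
  set h : ℂ → ℂ := fun z => Complex.exp (Complex.log (g z) / 2) with hh
  have hhd : DifferentiableOn ℂ h (ball 0 R) := ((hd.clog hm).div_const 2).cexp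
  have hsq : ∀ z ∈ ball (0:ℂ) R, g z = h z ^ 2 := by
    intro z hz
    rw [hh]
    simp only
    rw [← Complex.exp_nat_mul]
    push_cast
    rw [mul_div_cancel₀ _ two_ne_zero, Complex.exp_log (Complex.slitPlane_ne_zero (hm z hz))]
  have hre : ∀ z ∈ ball (0:ℂ) R, 0 < (h z).re := by
    intro z hz
    rw [hh]
    simp only
    rw [Complex.exp_re]
    apply mul_pos (Real.exp_pos _)
    have h1 : (Complex.log (g z) / 2).im = Complex.arg (g z) / 2 := by
      rw [Complex.div_ofNat_im, Complex.log_im]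
    rw [h1]
    apply Real.cos_pos_of_mem_Ioo
    have h2 := Complex.neg_pi_lt_arg (g z)
    have h3 := (Complex.mem_slitPlane_iff_arg.1 (hm z hz)).1
    have h4 := lt_of_le_of_ne (Complex.arg_le_pi (g z)) h3
    constructor <;> linarith
  have hS := halfplane_schwarz hR hhd hre
  have hev : g =ᶠ[𝓝 0] fun z => h z ^ 2 := by
    filter_upwards [isOpen_ball.mem_nhds h00] with z hz using hsq z hz
  have hd0 : HasDerivAt h (deriv h 0) 0 :=
    (hhd.differentiableAt (isOpen_ball.mem_nhds h00)).hasDerivAt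
  have hder : deriv g 0 = 2 * h 0 * deriv h 0 := by
    have h2 : HasDerivAt (fun z => h z ^ 2) (2 * h 0 * deriv h 0) 0 := by
      simpa using hd0.fun_pow 2
    rw [hev.deriv_eq, h2.deriv]
  rw [hder, hsq 0 h00, norm_mul, norm_mul, norm_pow]
  have : ‖(2:ℂ)‖ = 2 := by simp
  rw [this]
  calc 2 * ‖h 0‖ * ‖deriv h 0‖ ≤ 2 * ‖h 0‖ * (2 / R * ‖h 0‖) := by gcongr
    _ = 4 / R * ‖h 0‖ ^ 2 := by ring

variable {E : Type*} [NormedAddCommGroup E] [NormedSpace ℂ E]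

/-- points around which `Ω` and `D` agree at scale `s` -/
def Loc (Ω D : Set E) (s : ℝ) (x : E) : Prop := x ∈ D ∧ ball x s ∩ Ω ⊆ D

/-- holomorphic discs in `Ω` centred at `x` -/
structure IsDisc (Ω : Set E) (f : ℂ → E) (x : E) : Prop where
  diff : DifferentiableOn ℂ f (ball (0:ℂ) 1)
  maps : MapsTo f (ball (0:ℂ) 1) Ω
  zero : f 0 = x

/-- The complete set of standing assumptions. -/
structure Setup (Ω D : Set E) (r c M R₀ C ν : ℝ) : Prop extends GeomDom D r c M where
  Ωo : IsOpen Ω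
  sub : D ⊆ Ω
  hR₀ : 1 ≤ R₀
  diam : ∀ x ∈ Ω, ∀ y ∈ Ω, dist x y < R₀
  hC : 0 < C
  hν : 0 < ν
  hlog : ∀ z ∈ D, ∀ v : E, v ≠ 0 → bdistDir D z v ≤ C / |Real.log (bdist D z)| ^ (1 + ν)

variable {Ω D : Set E} {r c M R₀ C ν : ℝ}

theorem Loc.near {s : ℝ} {x y : E} (h : Loc Ω D s x) (hs : 0 < s) (hy : y ∈ Ω) (hd : dist y x ≤ s / 2) :
    Loc Ω D (s / 2) y := by
  refine ⟨h.2 ⟨?_, hy⟩, fun z hz => h.2 ⟨?_, hz.2⟩⟩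
  · rw [mem_ball]; linarith
  · have := hz.1
    rw [mem_ball] at this ⊢
    have := dist_triangle z y x
    linarith

theorem Setup.disc_dist (h : Setup Ω D r c M R₀ C ν) {f : ℂ → E} {x : E} (hf : IsDisc Ω f x)
    {z : ℂ} (hz : ‖z‖ < 1) : dist (f z) x ≤ R₀ * ‖z‖ := by
  have h0 : (0:ℂ) ∈ ball (0:ℂ) 1 := mem_ball_self one_pos
  have hzb : z ∈ ball (0:ℂ) 1 := by simpa using hz
  have := Complex.dist_le_div_mul_dist_of_mapsTo_ball hf.diff (R₂ := R₀) (fun w hw =>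
    (h.diam _ (hf.maps hw) _ (hf.maps h0)).le) hzb
  rwa [div_one, dist_zero_right, hf.zero] at this

theorem Setup.disc_deriv_le (h : Setup Ω D r c M R₀ C ν) {f : ℂ → E} {x : E} (hf : IsDisc Ω f x) :
    ‖deriv f 0‖ ≤ R₀ := by
  have h0 : (0:ℂ) ∈ ball (0:ℂ) 1 := mem_ball_self one_pos
  have := Complex.norm_deriv_le_div_of_mapsTo_ball hf.diff (R₂ := R₀) (fun w hw =>
    (h.diam _ (hf.maps hw) _ (hf.maps h0)).le) one_pos
  rwa [div_one] at this

theorem Setup.disc_L (h : Setup Ω D r c M R₀ C ν) {s : ℝ} (hs : 0 < s) :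
    ∃ C₁, 0 < C₁ ∧ ∀ x, Loc Ω D s x → ∀ ξ, dist x ξ < r / (2 * M) → ∀ L : E →L[ℂ] ℂ,
      (∀ y ∈ D, dist y ξ < r / M → - L (y - ξ) ∈ Complex.slitPlane) →
      ∀ f, IsDisc Ω f x → ‖L (deriv f 0)‖ ≤ C₁ * ‖L (x - ξ)‖ := by
  have hM := h.hM
  have hr := h.hr
  have hR := h.hR₀
  have hR0 : 0 < R₀ := by linarith
  have hM0 : 0 < M := by linarith
  set κ := min 1 (min s (r / (2 * M)) / R₀) with hκ
  have hκ0 : 0 < κ := by positivity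
  have hκ1 : κ ≤ 1 := min_le_left _ _
  have hκs : R₀ * κ ≤ min s (r / (2 * M)) := by
    have : κ ≤ min s (r / (2 * M)) / R₀ := min_le_right _ _
    rw [le_div_iff₀ hR0] at this; linarith
  refine ⟨4 / κ, by positivity, fun x hx ξ hξ L hL f hf => ?_⟩
  have hmem : ∀ z ∈ ball (0:ℂ) κ, - L (f z - ξ) ∈ Complex.slitPlane := by
    intro z hz
    rw [mem_ball, dist_zero_right] at hz
    have hz1 : ‖z‖ < 1 := hz.trans_le hκ1
    have hd := h.disc_dist hf hz1
    have hd2 : dist (f z) x < min s (r / (2 * M)) :=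
      hd.trans_lt ((mul_lt_mul_of_pos_left hz hR0).trans_le hκs)
    refine hL _ (hx.2 ⟨hd2.trans_le (min_le_left _ _), hf.maps (by simpa using hz1)⟩) ?_
    have h1 := hd2.trans_le (min_le_right _ _)
    have h2 := dist_triangle (f z) x ξ
    have h3 : r / M = r / (2 * M) + r / (2 * M) := by field_simp; norm_num
    linarith
  have hfd : DifferentiableOn ℂ f (ball 0 κ) := hf.diff.mono (ball_subset_ball hκ1)
  have hgd : DifferentiableOn ℂ (fun z => - L (f z - ξ)) (ball 0 κ) :=
    (L.differentiable.comp_differentiableOn (hfd.sub (differentiableOn_const _))).neg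
  have hS := slit_schwarz hκ0 hgd hmem
  have hf0 : HasDerivAt f (deriv f 0) 0 :=
    (hf.diff.differentiableAt (isOpen_ball.mem_nhds (mem_ball_self one_pos))).hasDerivAt
  have hder : HasDerivAt (fun z => - L (f z - ξ)) (- L (deriv f 0)) 0 :=
    (L.hasFDerivAt.comp_hasDerivAt (0:ℂ) (hf0.sub_const ξ)).neg
  rw [hder.deriv, norm_neg, norm_neg, hf.zero] at hS
  exact hS

theorem line_preconnected (x v : E) : IsPreconnected {w | ∃ c : ℂ, w = x + c • v} := by
  have : {w | ∃ c : ℂ, w = x + c • v} = range (fun c : ℂ => x + c • v) := by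
    ext w; simp [eq_comm]
  rw [this]
  exact isPreconnected_range (by fun_prop)

theorem GeomDom.line_nearest [ProperSpace E] (h : GeomDom D r c M) {x v : E} (hx : x ∈ D) (hv : v ≠ 0) :
    ∃ a : ℂ, x + a • v ∈ frontier D ∧ ‖a • v‖ = bdistDir D x v := by
  have hcl : IsClosed (frontier D ∩ {w | ∃ c : ℂ, w = x + c • v}) := by
    apply isClosed_frontier.inter
    have : {w | ∃ c : ℂ, w = x + c • v} = (fun w => w - x) ⁻¹' (Submodule.span ℂ {v} : Set E) := by
      ext w
      simp only [mem_preimage, SetLike.mem_coe, Submodule.mem_span_singleton]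
      constructor
      · rintro ⟨c, rfl⟩; exact ⟨c, by simp⟩
      · rintro ⟨c, hc⟩; exact ⟨c, by rw [hc]; abel⟩
    rw [this]
    exact (Submodule.closed_of_finiteDimensional _).preimage (by fun_prop)
  have hne : (frontier D ∩ {w | ∃ c : ℂ, w = x + c • v}).Nonempty := by
    by_contra hcon
    rw [not_nonempty_iff_eq_empty] at hcon
    have hsub : {w | ∃ c : ℂ, w = x + c • v} ⊆ D := by
      refine subset_of_disjoint_frontier h.isOpen (line_preconnected x v) ⟨x, ⟨0, by simp⟩, hx⟩ ?_
      intro y hy hf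
      have : y ∈ frontier D ∩ {w | ∃ c : ℂ, w = x + c • v} := ⟨hf, hy⟩
      rw [hcon] at this; exact this
    obtain ⟨B, hB⟩ := h.bdd.exists_norm_le
    have hvn : 0 < ‖v‖ := norm_pos_iff.2 hv
    have hB0 : 0 ≤ B := (norm_nonneg _).trans (hB x hx)
    have h1 := hB _ (hsub ⟨(((2 * B + 1) / ‖v‖ : ℝ) : ℂ), rfl⟩)
    have h2 := norm_sub_le (x + (((2 * B + 1) / ‖v‖ : ℝ) : ℂ) • v) x
    rw [add_sub_cancel_left, norm_smul, Complex.norm_real, Real.norm_of_nonneg (by positivity),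
      div_mul_cancel₀ _ hvn.ne'] at h2
    linarith [hB x hx]
  obtain ⟨ξ, ⟨h1, a, rfl⟩, h2⟩ := hcl.exists_infDist_eq_dist hne x
  refine ⟨a, h1, ?_⟩
  rw [bdistDir, h2, dist_eq_norm, sub_add_cancel_left, norm_neg]

theorem tendsto_rpow_neg_mul {ν : ℝ} (hν : 0 < ν) (K : ℝ) :
    Tendsto (fun l : ℝ => K * l ^ (-(1 + ν))) atTop (𝓝 0) := by
  simpa using (tendsto_rpow_neg_atTop (by linarith : 0 < 1 + ν)).const_mul K

theorem Setup.disc_deriv [ProperSpace E] (h : Setup Ω D r c M R₀ C ν) {s : ℝ} (hs : 0 < s) :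
    ∃ C₂, 0 < C₂ ∧ ∀ x, Loc Ω D s x → ∀ f, IsDisc Ω f x →
      ‖deriv f 0‖ ≤ C₂ * lam D x ^ (-(1 + ν)) := by
  obtain ⟨C₁, hC₁, hL⟩ := h.disc_L hs
  have hM := h.hM
  have hr := h.hr
  have hR := h.hR₀
  have hν := h.hν
  have hC := h.hC
  have hR0 : 0 < R₀ := by linarith
  have hM0 : 0 < M := by linarith
  obtain ⟨Λ, hΛ1, hΛ⟩ : ∃ Λ : ℝ, 1 ≤ Λ ∧ ∀ l > Λ, C * l ^ (-(1 + ν)) < r / (2 * M) := by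
    have := ((tendsto_rpow_neg_mul hν C).eventually (gt_mem_nhds (by positivity : 0 < r / (2 * M))))
    obtain ⟨Λ, hΛ⟩ := (this.and (eventually_ge_atTop 1)).exists_forall_of_atTop
    exact ⟨max Λ 1, le_max_right _ _, fun l hl => (hΛ l ((le_max_left _ _).trans hl.le)).1⟩
  have hΛ0 : 0 < Λ := by linarith
  refine ⟨C₁ * C + R₀ * Λ ^ (1 + ν), by positivity, fun x hx f hf => ?_⟩
  have hl1 := one_le_lam D x
  have hl0 : 0 < lam D x := by linarith
  have hΦ : 0 < lam D x ^ (-(1 + ν)) := Real.rpow_pos_of_pos hl0 _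
  rcases le_or_gt (lam D x) Λ with hle | hgt
  · refine (h.disc_deriv_le hf).trans ?_
    have h1 : lam D x ^ (1 + ν) ≤ Λ ^ (1 + ν) := Real.rpow_le_rpow hl0.le hle (by linarith)
    have h2 : lam D x ^ (1 + ν) * lam D x ^ (-(1 + ν)) = 1 := by
      rw [← Real.rpow_add hl0]; simp
    have h3 : 1 ≤ Λ ^ (1 + ν) * lam D x ^ (-(1 + ν)) := by
      exact h2.symm.le.trans (mul_le_mul_of_nonneg_right h1 hΦ.le)
    have h4 : 0 ≤ C₁ * C * lam D x ^ (-(1 + ν)) := by positivity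
    nlinarith
  · by_cases hv : deriv f 0 = 0
    · rw [hv, norm_zero]; positivity
    obtain ⟨a, ha1, ha2⟩ := h.line_nearest hx.1 hv
    have hlog : lam D x = - Real.log (bdist D x) := by
      rcases max_choice 1 (- Real.log (bdist D x)) with h1 | h1
      · unfold lam at hgt; rw [h1] at hgt; linarith
      · exact h1
    have habs : |Real.log (bdist D x)| = lam D x := by
      rw [hlog, abs_of_nonpos (by linarith)]
    have hb := h.hlog x hx.1 _ hv
    rw [habs, div_eq_mul_inv, ← Real.rpow_neg hl0.le] at hb
    have hsm : bdistDir D x (deriv f 0) < r / (2 * M) := hb.trans_lt (hΛ _ hgt)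
    obtain ⟨L, hL1, hL2, hL3, hL4, hL5⟩ := h.geomL ha1
    have h1 := hL x hx (x + a • deriv f 0) (by
      rw [dist_eq_norm, sub_add_cancel_left, norm_neg, ha2]; exact hsm) L hL5 f hf
    have h2 := hL3 x hx.1
    rw [sub_add_cancel_left, map_neg, map_smul, smul_eq_mul] at h1 h2
    have h3 : L (deriv f 0) ≠ 0 := by
      intro h0; rw [h0] at h2; simp at h2
    rw [norm_neg, norm_mul] at h1
    have h4 : 1 ≤ C₁ * ‖a‖ := by
      have := norm_pos_iff.2 h3
      by_contra hlt
      push Not at hlt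
      nlinarith
    rw [norm_smul] at ha2
    have h5 : 0 ≤ R₀ * Λ ^ (1 + ν) * lam D x ^ (-(1 + ν)) := by positivity
    have h6 : ‖deriv f 0‖ ≤ C₁ * bdistDir D x (deriv f 0) := by
      rw [← ha2]; nlinarith [norm_nonneg (deriv f 0)]
    have h7 : C₁ * bdistDir D x (deriv f 0) ≤ C₁ * (C * lam D x ^ (-(1 + ν))) := by gcongr
    nlinarith

theorem Setup.norm_le_kob [ProperSpace E] (h : Setup Ω D r c M R₀ C ν) {s : ℝ} (hs : 0 < s) :
    ∃ C₂, 0 < C₂ ∧ ∀ x, Loc Ω D s x → ∀ v,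
      ‖v‖ ≤ C₂ * lam D x ^ (-(1 + ν)) * kobMetric Ω x v := by
  obtain ⟨C₂, hC₂, hd⟩ := h.disc_deriv hs
  refine ⟨C₂, hC₂, fun x hx v => ?_⟩
  have hl0 : 0 < lam D x := by linarith [one_le_lam D x]
  have hΦ : 0 < lam D x ^ (-(1 + ν)) := Real.rpow_pos_of_pos hl0 _
  have := le_kobMetric h.Ωo (h.sub hx.1) (v := v) (c := ‖v‖ / (C₂ * lam D x ^ (-(1 + ν)))) (by
    intro f ξ h1 h2 h3 h4
    have := hd x hx f ⟨h1, h2, h3⟩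
    rw [div_le_iff₀ (by positivity), ← h4, norm_smul]
    gcongr)
  rwa [div_le_iff₀ (by positivity), mul_comm] at this
end PartD

open Metric Set MeasureTheory Filter Topology

section PartD2
set_option linter.unusedSectionVars false
variable {E : Type*} [NormedAddCommGroup E] [NormedSpace ℂ E]
variable {Ω D : Set E} {r c M R₀ C ν : ℝ}

theorem first_exit {g : ℝ → ℝ} {T s₀ : ℝ} (hg : ContinuousOn g (Icc 0 T))
    (hstep : ∀ τ₁ ∈ Icc 0 T, (∀ τ ∈ Ico 0 τ₁, g τ < s₀) → g τ₁ < s₀) :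
    ∀ τ ∈ Icc 0 T, g τ < s₀ := by
  by_contra hcon
  push Not at hcon
  obtain ⟨τ, hτ, hgτ⟩ := hcon
  have hcomp : IsCompact (Icc 0 T ∩ g ⁻¹' Ici s₀) :=
    (isCompact_Icc.of_isClosed_subset (hg.preimage_isClosed_of_isClosed isClosed_Icc isClosed_Ici)
      inter_subset_left)
  obtain ⟨τ₁, ⟨h1, h2⟩, h3⟩ := hcomp.exists_isLeast ⟨τ, hτ, hgτ⟩
  refine absurd (hstep τ₁ h1 fun t ht => ?_) (not_lt.2 h2)
  by_contra hlt
  push Not at hlt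
  exact absurd (h3 ⟨⟨ht.1, ht.2.le.trans h1.2⟩, hlt⟩) (not_le.2 ht.2)

theorem IsDisc.rescale {f : ℂ → E} {x : E} (hf : IsDisc Ω f x) {ζ : ℂ} (hζ : ‖ζ‖ < 1) :
    IsDisc Ω (fun w => f (ζ + ((1 - ‖ζ‖ : ℝ) : ℂ) * w)) (f ζ) ∧
    deriv (fun w => f (ζ + ((1 - ‖ζ‖ : ℝ) : ℂ) * w)) 0 = ((1 - ‖ζ‖ : ℝ) : ℂ) • deriv f ζ := by
  have hm : MapsTo (fun w : ℂ => ζ + ((1 - ‖ζ‖ : ℝ) : ℂ) * w) (ball 0 1) (ball 0 1) := by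
    intro w hw
    rw [mem_ball, dist_zero_right] at hw ⊢
    refine (norm_add_le _ _).trans_lt ?_
    rw [norm_mul, Complex.norm_real, Real.norm_of_nonneg (by linarith)]
    nlinarith
  refine ⟨⟨hf.diff.comp (by fun_prop) hm, hf.maps.comp hm, by simp⟩, ?_⟩
  have h1 : HasDerivAt (fun w : ℂ => ζ + ((1 - ‖ζ‖ : ℝ) : ℂ) * w) ((1 - ‖ζ‖ : ℝ) : ℂ) 0 := by
    simpa using ((hasDerivAt_id (0:ℂ)).const_mul ((1 - ‖ζ‖ : ℝ) : ℂ)).const_add ζ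
  have h2 : HasDerivAt f (deriv f ζ) ((fun w : ℂ => ζ + ((1 - ‖ζ‖ : ℝ) : ℂ) * w) 0) := by
    simpa using (hf.diff.differentiableAt (isOpen_ball.mem_nhds (by simpa using hζ))).hasDerivAt
  exact (h2.scomp (0:ℂ) h1).deriv

theorem radial_path {f : ℂ → E} {x : E} (hf : IsDisc Ω f x) {e : ℂ} (he : ‖e‖ = 1) {τ : ℝ}
    (hτ : 0 ≤ τ) :
    ‖((1 - Real.exp (-τ) : ℝ) : ℂ) * e‖ = 1 - Real.exp (-τ) ∧
    HasDerivAt (fun τ : ℝ => f (((1 - Real.exp (-τ) : ℝ) : ℂ) * e))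
      (e • ((Real.exp (-τ) : ℝ) : ℂ) • deriv f (((1 - Real.exp (-τ) : ℝ) : ℂ) * e)) τ := by
  have h1 : Real.exp (-τ) ≤ 1 := Real.exp_le_one_iff.2 (by linarith)
  have hn : ‖((1 - Real.exp (-τ) : ℝ) : ℂ) * e‖ = 1 - Real.exp (-τ) := by
    rw [norm_mul, he, mul_one, Complex.norm_real, Real.norm_of_nonneg (by linarith)]
  refine ⟨hn, ?_⟩
  have hd0 : HasDerivAt (fun τ : ℝ => 1 - Real.exp (-τ)) (Real.exp (-τ)) τ := by
    simpa using ((hasDerivAt_neg τ).exp).const_sub 1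
  have hd1 : HasDerivAt (fun τ : ℝ => ((1 - Real.exp (-τ) : ℝ) : ℂ) * e)
      (((Real.exp (-τ) : ℝ) : ℂ) * e) τ := hd0.ofReal_comp.mul_const e
  have hd2 : HasDerivAt f (deriv f (((1 - Real.exp (-τ) : ℝ) : ℂ) * e))
      (((1 - Real.exp (-τ) : ℝ) : ℂ) * e) := by
    refine (hf.diff.differentiableAt (isOpen_ball.mem_nhds ?_)).hasDerivAt
    rw [mem_ball, dist_zero_right, hn]
    linarith [Real.exp_pos (-τ)]
  have := hd2.scomp τ hd1
  rw [mul_comm, mul_smul] at this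
  exact this

theorem Setup.stay_num (h : Setup Ω D r c M R₀ C ν) {s₀ C₁ C₂ : ℝ} (hs₀ : 0 < s₀) :
    ∃ Λ : ℝ, 2 ≤ Λ ∧ ∀ l, Λ ≤ l → Real.exp (-l) < r / (4 * M) ∧
      Real.log M + C₁ * ((1 + ν) * Real.log l) ≤ l / 2 ∧
      C₂ * 2 ^ (1 + ν) * (1 + ν) * l ^ (-ν) < s₀ := by
  have hM := h.hM
  have hr := h.hr
  have hM0 : 0 < M := by linarith
  have e1 : ∀ᶠ l : ℝ in atTop, Real.exp (-l) < r / (4 * M) :=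
    Real.tendsto_exp_neg_atTop_nhds_zero.eventually (gt_mem_nhds (by positivity))
  have e2 : ∀ᶠ l : ℝ in atTop, Real.log M + C₁ * ((1 + ν) * Real.log l) ≤ l / 2 := by
    have h1 : (fun l : ℝ => Real.log M + C₁ * ((1 + ν) * Real.log l)) =o[atTop] (fun l : ℝ => l) := by
      apply Asymptotics.IsLittleO.add
      · exact Asymptotics.isLittleO_const_id_atTop _
      · exact (Real.isLittleO_log_id_atTop.const_mul_left _).const_mul_left _
    filter_upwards [h1.def (c := 1/2) (by norm_num), eventually_ge_atTop 0] with l hl hl0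
    rw [Real.norm_of_nonneg hl0] at hl
    linarith [le_abs_self (Real.log M + C₁ * ((1 + ν) * Real.log l)), (Real.norm_eq_abs (Real.log M + C₁ * ((1 + ν) * Real.log l))).symm.le]
  have e3 : ∀ᶠ l : ℝ in atTop, C₂ * 2 ^ (1 + ν) * (1 + ν) * l ^ (-ν) < s₀ := by
    have : Tendsto (fun l : ℝ => C₂ * 2 ^ (1 + ν) * (1 + ν) * l ^ (-ν)) atTop (𝓝 0) := by
      simpa using (tendsto_rpow_neg_atTop h.hν).const_mul (C₂ * 2 ^ (1 + ν) * (1 + ν))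
    exact this.eventually (gt_mem_nhds hs₀)
  obtain ⟨Λ, hΛ⟩ := (e1.and (e2.and e3)).exists_forall_of_atTop
  exact ⟨max Λ 2, le_max_right _ _, fun l hl => hΛ l ((le_max_left _ _).trans hl)⟩

theorem lam_eq_of_one_lt {x : E} (h : 1 < lam D x) : lam D x = - Real.log (bdist D x) := by
  rcases max_choice 1 (- Real.log (bdist D x)) with h1 | h1
  · unfold lam at h; rw [h1] at h; linarith
  · exact h1

theorem Setup.stay [ProperSpace E] (h : Setup Ω D r c M R₀ C ν) {s : ℝ} (hs : 0 < s) :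
    ∃ Λ : ℝ, 2 ≤ Λ ∧ ∀ x, Loc Ω D s x → Λ ≤ lam D x → ∀ f, IsDisc Ω f x →
      ∀ z : ℂ, ‖z‖ ≤ 1 - lam D x ^ (-(1 + ν)) → f z ∈ D := by
  obtain ⟨C₁, hC₁, hL1⟩ := h.disc_L (half_pos hs)
  obtain ⟨C₂, hC₂, hL2⟩ := h.disc_deriv (half_pos hs)
  have hM := h.hM
  have hr := h.hr
  have hν := h.hν
  have hM0 : 0 < M := by linarith
  set s₀ := min (s / 2) (r / (4 * M)) with hs₀
  have hs₀0 : 0 < s₀ := by positivity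
  obtain ⟨Λ, hΛ2, hΛ⟩ := h.stay_num (C₁ := C₁) (C₂ := C₂) hs₀0
  refine ⟨Λ, hΛ2, fun x hx hxl f hf z hz => ?_⟩
  obtain ⟨n1, n2, n3⟩ := hΛ _ hxl
  set l := lam D x with hl
  have hl2 : 2 ≤ l := hΛ2.trans hxl
  have hl0 : 0 < l := by linarith
  have hΦ : 0 < l ^ (-(1 + ν)) := Real.rpow_pos_of_pos hl0 _
  have hδ0 := h.bdist_pos hx.1
  have hlδ : l = - Real.log (bdist D x) := lam_eq_of_one_lt (by linarith)
  have hδ : bdist D x = Real.exp (-l) := by rw [hlδ, neg_neg, Real.exp_log hδ0]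
  by_cases hz0 : z = 0
  · rw [hz0, hf.zero]; exact hx.1
  have hzn : 0 < ‖z‖ := norm_pos_iff.2 hz0
  set e : ℂ := ((‖z‖⁻¹ : ℝ) : ℂ) * z with he
  have hen : ‖e‖ = 1 := by
    rw [he, norm_mul, Complex.norm_real, norm_inv, norm_norm, inv_mul_cancel₀ hzn.ne']
  set y : ℝ → E := fun τ => f (((1 - Real.exp (-τ) : ℝ) : ℂ) * e) with hy
  set T := (1 + ν) * Real.log l with hT
  have hlogl : 0 ≤ Real.log l := Real.log_nonneg (by linarith)
  have hT0 : 0 ≤ T := by positivity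
  have hTl : T ≤ (1 + ν) * l := by
    rw [hT]; gcongr
    exact (Real.log_le_sub_one_of_pos hl0).trans (by linarith)
  have hy0 : y 0 = x := by simp [hy, hf.zero]
  obtain ⟨ξ, hξ, hξd⟩ := h.nearest x
  obtain ⟨L, hLM, hLne, hL3, hL4, hL5⟩ := h.geomL hξ
  have hcont : ContinuousOn y (Icc 0 T) := fun τ hτ =>
    (radial_path hf hen hτ.1).2.continuousAt.continuousWithinAt
  have hyΩ : ∀ τ, 0 ≤ τ → y τ ∈ Ω := by
    intro τ hτ
    apply hf.maps
    rw [mem_ball, dist_zero_right, (radial_path hf hen hτ).1]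
    linarith [Real.exp_pos (-τ)]
  have main : ∀ τ ∈ Icc 0 T, dist (y τ) x < s₀ := by
    apply first_exit (show ContinuousOn (fun τ => dist (y τ) x) (Icc 0 T) from continuous_dist.comp_continuousOn (hcont.prodMk continuousOn_const))
    intro τ₁ hτ₁ hbef
    have hloc : ∀ τ ∈ Ico 0 τ₁, Loc Ω D (s / 2) (y τ) := fun τ hτ =>
      hx.near hs (hyΩ τ hτ.1) ((hbef τ hτ).le.trans (min_le_left _ _))
    have hyξ : ∀ τ ∈ Ico 0 τ₁, dist (y τ) ξ < r / (2 * M) := by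
      intro τ hτ
      have h1 := (hbef τ hτ).trans_le (min_le_right _ _)
      have h2 := dist_triangle (y τ) x ξ
      have h3 : r / (2 * M) = r / (4 * M) + r / (4 * M) := by field_simp; norm_num
      rw [← hξd, hδ] at h2
      linarith
    set y' : ℝ → E := fun τ =>
      e • ((Real.exp (-τ) : ℝ) : ℂ) • deriv f (((1 - Real.exp (-τ) : ℝ) : ℂ) * e) with hy'
    have hder : ∀ τ, 0 ≤ τ → HasDerivAt y (y' τ) τ := fun τ hτ => (radial_path hf hen hτ).2
    -- the rescaled discs
    have hresc : ∀ τ, 0 ≤ τ → ∃ F, IsDisc Ω F (y τ) ∧ y' τ = e • deriv F 0 := by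
      intro τ hτ
      have hn := (radial_path hf hen hτ).1
      obtain ⟨h1, h2⟩ := hf.rescale (ζ := ((1 - Real.exp (-τ) : ℝ) : ℂ) * e)
        (by rw [hn]; linarith [Real.exp_pos (-τ)])
      refine ⟨_, h1, ?_⟩
      rw [h2, hn, sub_sub_cancel]
    have hub : ∀ τ ∈ Ico 0 τ₁, ‖L (y' τ)‖ ≤ C₁ * ‖L (y τ - ξ)‖ + 0 := by
      intro τ hτ
      obtain ⟨F, hF, hF2⟩ := hresc τ hτ.1
      rw [hF2, map_smul, norm_smul, hen, one_mul, add_zero]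
      exact hL1 (y τ) (hloc τ hτ) ξ (hyξ τ hτ) L hL5 F hF
    have hsubI : Icc 0 τ₁ ⊆ Icc 0 T := Icc_subset_Icc_right hτ₁.2
    have hgr := norm_le_gronwallBound_of_norm_deriv_right_le (f := fun τ => L (y τ - ξ))
      (f' := fun τ => L (y' τ)) (a := 0) (b := τ₁) (δ := M * bdist D x) (K := C₁) (ε := 0)
      (L.continuous.comp_continuousOn ((hcont.mono hsubI).sub continuousOn_const))
      (fun τ hτ => (L.hasFDerivAt.restrictScalars ℝ |>.comp_hasDerivAt τ
        ((hder τ hτ.1).sub_const ξ)).hasDerivWithinAt)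
      (by
        rw [hy0]
        refine (L.le_opNorm _).trans ?_
        rw [← dist_eq_norm, ← hξd]
        gcongr) hub
    have hlamy : ∀ τ ∈ Ico 0 τ₁, l / 2 ≤ lam D (y τ) := by
      intro τ hτ
      have h1 := hgr τ ⟨hτ.1, hτ.2.le⟩
      rw [gronwallBound_ε0, sub_zero] at h1
      have hyD : y τ ∈ D := (hloc τ hτ).1
      have h2 := (hL4 _ hyD).trans h1
      have h3 := Real.log_le_log (h.bdist_pos hyD) h2
      rw [Real.log_mul (by positivity) (Real.exp_pos _).ne', Real.log_mul hM0.ne' hδ0.ne',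
        Real.log_exp] at h3
      have h4 : C₁ * τ ≤ C₁ * T := by
        gcongr; exact hτ.2.le.trans hτ₁.2
      have h5 : - Real.log (bdist D (y τ)) ≤ lam D (y τ) := le_max_right _ _
      linarith
    have hbd : ∀ τ ∈ Ico 0 τ₁, ‖y' τ‖ ≤ C₂ * 2 ^ (1 + ν) * l ^ (-(1 + ν)) := by
      intro τ hτ
      obtain ⟨F, hF, hF2⟩ := hresc τ hτ.1
      rw [hF2, norm_smul, hen, one_mul]
      refine (hL2 _ (hloc τ hτ) F hF).trans ?_
      rw [mul_assoc]
      gcongr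
      have h1 : lam D (y τ) ^ (-(1 + ν)) ≤ (l / 2) ^ (-(1 + ν)) :=
        Real.rpow_le_rpow_of_nonpos (by positivity) (hlamy τ hτ) (by linarith)
      refine h1.trans (le_of_eq ?_)
      rw [Real.div_rpow hl0.le (by norm_num), Real.rpow_neg (by norm_num : (0:ℝ) ≤ 2), div_inv_eq_mul,
        mul_comm]
    have hmv := norm_image_sub_le_of_norm_deriv_le_segment' (f := y) (f' := y') (a := 0) (b := τ₁)
      (fun τ hτ => (hder τ hτ.1).hasDerivWithinAt) hbd τ₁ ⟨hτ₁.1, le_rfl⟩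
    rw [hy0, ← dist_eq_norm, sub_zero] at hmv
    refine hmv.trans_lt (lt_of_le_of_lt ?_ n3)
    have h1 : τ₁ ≤ (1 + ν) * l := hτ₁.2.trans hTl
    have h2 : l ^ (-(1 + ν)) * l = l ^ (-ν) := by
      nth_rewrite 2 [← Real.rpow_one l]
      rw [← Real.rpow_add hl0]; congr 1; ring
    calc C₂ * 2 ^ (1 + ν) * l ^ (-(1 + ν)) * τ₁
        ≤ C₂ * 2 ^ (1 + ν) * l ^ (-(1 + ν)) * ((1 + ν) * l) := by gcongr
      _ = C₂ * 2 ^ (1 + ν) * (1 + ν) * (l ^ (-(1 + ν)) * l) := by ring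
      _ = _ := by rw [h2]
  -- conclusion
  have h1z : 0 < 1 - ‖z‖ := by linarith
  have hτz : - Real.log (1 - ‖z‖) ∈ Icc 0 T := by
    constructor
    · have := Real.log_nonpos h1z.le (by linarith)
      linarith
    · have := Real.log_le_log hΦ (by linarith : l ^ (-(1 + ν)) ≤ 1 - ‖z‖)
      rw [Real.log_rpow hl0] at this
      linarith
  have hyz : y (- Real.log (1 - ‖z‖)) = f z := by
    rw [hy]
    simp only [neg_neg]
    rw [Real.exp_log h1z, sub_sub_cancel, he, ← mul_assoc, ← Complex.ofReal_mul,
      mul_inv_cancel₀ hzn.ne']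
    simp
  rw [← hyz]
  refine hx.2 ⟨?_, hyΩ _ hτz.1⟩
  rw [mem_ball]
  have := (main _ hτz).trans_le (min_le_left _ _)
  linarith

theorem kobMetric_localise {x : E} (hΩ : IsOpen Ω) (hx : x ∈ Ω) {ρ : ℝ} (hρ : 0 < ρ) (hρ1 : ρ ≤ 1)
    (h : ∀ f, IsDisc Ω f x → ∀ z : ℂ, ‖z‖ < ρ → f z ∈ D) (v : E) :
    ρ * kobMetric D x v ≤ kobMetric Ω x v := by
  apply le_kobMetric hΩ hx
  intro f ξ h1 h2 h3 h4
  have hm : MapsTo (fun w : ℂ => (ρ : ℂ) * w) (ball 0 1) (ball 0 1) := by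
    intro w hw
    rw [mem_ball, dist_zero_right] at hw ⊢
    rw [norm_mul, Complex.norm_real, Real.norm_of_nonneg hρ.le]
    nlinarith [norm_nonneg w]
  have hd1 : HasDerivAt (fun w : ℂ => (ρ : ℂ) * w) (ρ : ℂ) 0 := by
    simpa using (hasDerivAt_id (0:ℂ)).const_mul (ρ : ℂ)
  have hd2 : HasDerivAt f (deriv f 0) ((fun w : ℂ => (ρ : ℂ) * w) 0) := by
    simpa using (h1.differentiableAt (isOpen_ball.mem_nhds (mem_ball_self one_pos))).hasDerivAt
  have hd := (hd2.scomp (0:ℂ) hd1).deriv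
  have hρc : (ρ : ℂ) ≠ 0 := by exact_mod_cast hρ.ne'
  have := kobMetric_le (D := D) (x := x) (v := v) (f ∘ fun w : ℂ => (ρ : ℂ) * w) (ξ / ρ)
    (h1.comp (by fun_prop) hm) (by
      intro w hw
      apply h f ⟨h1, h2, h3⟩
      rw [mem_ball, dist_zero_right] at hw
      rw [norm_mul, Complex.norm_real, Real.norm_of_nonneg hρ.le]
      nlinarith [norm_nonneg w]) (by simpa using h3) (by
      rw [hd, smul_smul, div_mul_cancel₀ _ hρc, h4])
  rw [norm_div, Complex.norm_real, Real.norm_of_nonneg hρ.le, le_div_iff₀ hρ] at this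
  linarith

theorem Setup.royden [ProperSpace E] (h : Setup Ω D r c M R₀ C ν) {s : ℝ} (hs : 0 < s) :
    ∃ C₃, 0 < C₃ ∧ ∀ x, Loc Ω D s x → ∀ v,
      kobMetric D x v ≤ (1 + C₃ * lam D x ^ (-(1 + ν))) * kobMetric Ω x v := by
  obtain ⟨Λ, hΛ2, hΛ⟩ := h.stay hs
  have hR := h.hR₀
  have hR0 : 0 < R₀ := by linarith
  have hν := h.hν
  have hΛ0 : 0 < Λ := by linarith
  set κ := min 1 (s / R₀) with hκ
  have hκ0 : 0 < κ := by positivity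
  have hκ1 : κ ≤ 1 := min_le_left _ _
  have hκs : R₀ * κ ≤ s := by
    have : κ ≤ s / R₀ := min_le_right _ _
    rw [le_div_iff₀ hR0] at this; linarith
  refine ⟨2 + κ⁻¹ * Λ ^ (1 + ν), by positivity, fun x hx v => ?_⟩
  have hl1 := one_le_lam D x
  have hl0 : 0 < lam D x := by linarith
  have hΦ : 0 < lam D x ^ (-(1 + ν)) := Real.rpow_pos_of_pos hl0 _
  have hk := kobMetric_nonneg Ω x v
  have hkD := kobMetric_nonneg D x v
  have hX : 0 < κ⁻¹ * Λ ^ (1 + ν) := by positivity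
  rcases le_or_gt Λ (lam D x) with hle | hgt
  · have hhalf : lam D x ^ (-(1 + ν)) ≤ 1 / 2 := by
      have h1 : lam D x ^ (-(1 + ν)) ≤ lam D x ^ (-1 : ℝ) :=
        Real.rpow_le_rpow_of_exponent_le hl1 (by linarith)
      rw [Real.rpow_neg_one] at h1
      have : (lam D x)⁻¹ ≤ 1 / 2 := by
        rw [one_div]
        exact inv_anti₀ (by norm_num) (hΛ2.trans hle)
      linarith
    set Φ := lam D x ^ (-(1 + ν)) with hΦd
    have := kobMetric_localise (D := D) h.Ωo (h.sub hx.1) (ρ := 1 - Φ) (by linarith) (by linarith)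
      (fun f hf z hz => hΛ x hx hle f hf z hz.le) v
    have h3 : kobMetric D x v ≤ (1 + 2 * Φ) * kobMetric Ω x v := by
      have h4 : 1 ≤ (1 + 2 * Φ) * (1 - Φ) := by nlinarith
      calc kobMetric D x v ≤ (1 + 2 * Φ) * (1 - Φ) * kobMetric D x v := by nlinarith
        _ = (1 + 2 * Φ) * ((1 - Φ) * kobMetric D x v) := by ring
        _ ≤ _ := by gcongr
    have h5 : 0 ≤ κ⁻¹ * Λ ^ (1 + ν) * Φ * kobMetric Ω x v := by positivity
    nlinarith
  · have := kobMetric_localise (D := D) h.Ωo (h.sub hx.1) hκ0 hκ1 (fun f hf z hz => by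
      have hz1 : ‖z‖ < 1 := hz.trans_le hκ1
      refine hx.2 ⟨?_, hf.maps (by simpa using hz1)⟩
      rw [mem_ball]
      exact (h.disc_dist hf hz1).trans_lt ((mul_lt_mul_of_pos_left hz hR0).trans_le hκs)) v
    have h1 : lam D x ^ (1 + ν) ≤ Λ ^ (1 + ν) := Real.rpow_le_rpow hl0.le hgt.le (by linarith)
    have h2 : lam D x ^ (1 + ν) * lam D x ^ (-(1 + ν)) = 1 := by
      rw [← Real.rpow_add hl0]; simp
    have h3 : 1 ≤ Λ ^ (1 + ν) * lam D x ^ (-(1 + ν)) :=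
      h2.symm.le.trans (mul_le_mul_of_nonneg_right h1 hΦ.le)
    have h4 : kobMetric D x v ≤ κ⁻¹ * kobMetric Ω x v := by
      rw [inv_mul_eq_div, le_div_iff₀ hκ0]; linarith
    have h5 : κ⁻¹ * kobMetric Ω x v * 1 ≤
        κ⁻¹ * kobMetric Ω x v * (Λ ^ (1 + ν) * lam D x ^ (-(1 + ν))) := by gcongr
    have h6 : 0 ≤ lam D x ^ (-(1 + ν)) * kobMetric Ω x v := by positivity
    nlinarith
end PartD2

open Metric Set MeasureTheory Filter Topology

section PartF
set_option linter.unusedSectionVars false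

theorem ac_comp_le {k : ℝ → ℝ} {a b c : ℝ} (hab : a ≤ b) (hc : c ∈ Icc a b)
    (hk : IntervalIntegrable k volume a b) (hk0 : ∀ t, 0 ≤ k t) {G w : ℝ → ℝ} {S : Set ℝ}
    (hG : MonotoneOn G S) (hS : ∀ t ∈ Icc a b, ∫ u in c..t, k u ∈ S)
    (hd : ∀ u ∈ S, HasDerivAt G (w u) u) :
    ∫ t in a..b, w (∫ u in c..t, k u) * k t ≤ G (∫ u in c..b, k u) - G (∫ u in c..a, k u) := by
  have hI : ∀ u ∈ Icc a b, ∀ v ∈ Icc a b, IntervalIntegrable k volume u v := by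
    intro u hu v hv
    apply hk.mono_set
    rw [uIcc_of_le hab]
    exact uIcc_subset_Icc hu hv
  have hmono : MonotoneOn (fun t => G (∫ u in c..t, k u)) (uIcc a b) := by
    rw [uIcc_of_le hab]
    intro x hx y hy hxy
    apply hG (hS x hx) (hS y hy)
    rw [← intervalIntegral.integral_add_adjacent_intervals (hI c hc x hx) (hI x hx y hy)]
    linarith [intervalIntegral.integral_nonneg hxy (μ := volume) (fun u _ => hk0 u)]
  have h1 := hmono.intervalIntegral_deriv_mem_uIcc
  have h2 : ∫ t in a..b, deriv (fun t => G (∫ u in c..t, k u)) t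
      = ∫ t in a..b, w (∫ u in c..t, k u) * k t := by
    apply intervalIntegral.integral_congr_ae
    filter_upwards [hk.ae_hasDerivAt_integral] with t ht htI
    have htI' : t ∈ uIcc a b := uIoc_subset_uIcc htI
    have h3 := ht htI' c (by rwa [uIcc_of_le hab])
    rw [uIcc_of_le hab] at htI'
    exact ((hd _ (hS t htI')).comp t h3).deriv
  rw [h2] at h1
  have h3 : G (∫ u in c..a, k u) ≤ G (∫ u in c..b, k u) :=
    hmono left_mem_uIcc right_mem_uIcc hab
  rw [uIcc_of_le (by simpa using h3)] at h1
  exact h1.2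

theorem weight_int {k : ℝ → ℝ} {a b c m : ℝ} (hab : a ≤ b) (hc : c ∈ Icc a b) (hm : 0 < m)
    (hk : IntervalIntegrable k volume a b) (hk0 : ∀ t, 0 ≤ k t) :
    IntervalIntegrable (fun t => (1 + |∫ u in c..t, k u|) ^ (-(1 + m)) * k t) volume a b ∧
    ∫ t in a..b, (1 + |∫ u in c..t, k u|) ^ (-(1 + m)) * k t ≤ 2 / m := by
  have hI : ∀ u ∈ Icc a b, ∀ v ∈ Icc a b, IntervalIntegrable k volume u v := by
    intro u hu v hv
    apply hk.mono_set
    rw [uIcc_of_le hab]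
    exact uIcc_subset_Icc hu hv
  have hcont : ContinuousOn (fun t => (1 + |∫ u in c..t, k u|) ^ (-(1 + m))) (uIcc a b) := by
    have h1 := intervalIntegral.continuousOn_primitive_interval' hk
      (show c ∈ uIcc a b by rwa [uIcc_of_le hab])
    apply ContinuousOn.rpow_const (continuousOn_const.add h1.abs)
    intro t _
    left
    exact ne_of_gt (by positivity : (0:ℝ) < 1 + |∫ u in c..t, k u|)
  have hInt : IntervalIntegrable (fun t => (1 + |∫ u in c..t, k u|) ^ (-(1 + m)) * k t) volume a b :=
    hk.continuousOn_mul hcont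
  have ha : a ∈ Icc a b := left_mem_Icc.2 hab
  have hb : b ∈ Icc a b := right_mem_Icc.2 hab
  refine ⟨hInt, ?_⟩
  have hIntL := hInt.mono_set (show uIcc a c ⊆ uIcc a b by
    rw [uIcc_of_le hab]; exact uIcc_subset_Icc ha hc)
  have hIntR := hInt.mono_set (show uIcc c b ⊆ uIcc a b by
    rw [uIcc_of_le hab]; exact uIcc_subset_Icc hc hb)
  rw [← intervalIntegral.integral_add_adjacent_intervals hIntL hIntR]
  have hpos : ∀ t, c ≤ t → 0 ≤ ∫ u in c..t, k u := fun t ht =>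
    intervalIntegral.integral_nonneg ht (fun u _ => hk0 u)
  have hneg : ∀ t, t ≤ c → ∫ u in c..t, k u ≤ 0 := fun t ht => by
    rw [intervalIntegral.integral_symm]
    linarith [intervalIntegral.integral_nonneg ht (μ := volume) (fun u _ => hk0 u)]
  have hle1 : ∀ x : ℝ, 0 ≤ x → (1 + x) ^ (-m) ≤ 1 := fun x hx =>
    Real.rpow_le_one_of_one_le_of_nonpos (by linarith) (by linarith)
  have hge0 : ∀ x : ℝ, 0 ≤ x → 0 ≤ (1 + x) ^ (-m) := fun x hx =>
    Real.rpow_nonneg (by linarith) _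
  have R : ∫ t in c..b, (1 + |∫ u in c..t, k u|) ^ (-(1 + m)) * k t ≤ 1 / m := by
    have := ac_comp_le (G := fun u => - ((1 + u) ^ (-m) / m)) (w := fun u => (1 + |u|) ^ (-(1 + m)))
      (S := Ici 0) hc.2 (left_mem_Icc.2 hc.2) (hI c hc b hb) hk0
      (by
        intro x hx y hy hxy
        have hx : (0:ℝ) ≤ x := hx
        simp only [neg_le_neg_iff]
        gcongr ?_ / m
        exact Real.rpow_le_rpow_of_nonpos (by linarith) (by linarith) (by linarith))
      (fun t ht => hpos t ht.1)
      (by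
        intro u hu
        have hu : (0:ℝ) ≤ u := hu
        have h1 := (((((hasDerivAt_id u).const_add 1).rpow_const (p := -m)
          (Or.inl (by simp only [id]; linarith))).div_const m).neg)
        have e : -(1 * -m * (1 + id u) ^ (-m - 1) / m) = (1 + |u|) ^ (-(1 + m)) := by
          rw [abs_of_nonneg hu, show -m - 1 = -(1 + m) by ring]
          simp only [id]
          field_simp
        rw [e] at h1
        exact h1)
    refine this.trans ?_
    simp only [intervalIntegral.integral_same, add_zero, Real.one_rpow]
    have := div_nonneg (hge0 _ (hpos b hc.2)) hm.le
    linarith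
  have L : ∫ t in a..c, (1 + |∫ u in c..t, k u|) ^ (-(1 + m)) * k t ≤ 1 / m := by
    have := ac_comp_le (G := fun u => ((1 - u) ^ (-m) / m)) (w := fun u => (1 + |u|) ^ (-(1 + m)))
      (S := Iic 0) hc.1 (right_mem_Icc.2 hc.1) (hI a ha c hc) hk0
      (by
        intro x hx y hy hxy
        have hy : y ≤ (0:ℝ) := hy
        simp only
        gcongr ?_ / m
        exact Real.rpow_le_rpow_of_nonpos (by linarith) (by linarith) (by linarith))
      (fun t ht => hneg t ht.2)
      (by
        intro u hu
        have hu : u ≤ (0:ℝ) := hu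
        have h1 := (((((hasDerivAt_id u).const_sub 1).rpow_const (p := -m)
          (Or.inl (by simp only [id]; linarith))).div_const m))
        have e : (-1 * -m * (1 - id u) ^ (-m - 1) / m) = (1 + |u|) ^ (-(1 + m)) := by
          rw [abs_of_nonpos hu, show -m - 1 = -(1 + m) by ring]
          simp only [id]
          field_simp
          ring_nf
        rw [e] at h1
        exact h1)
    refine this.trans ?_
    simp only [intervalIntegral.integral_same, sub_zero, Real.one_rpow]
    have h2 := hge0 (-∫ u in c..a, k u) (by linarith [hneg a hc.1])
    rw [← sub_eq_add_neg] at h2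
    have := div_nonneg h2 hm.le
    linarith
  have : 2 / m = 1 / m + 1 / m := by ring
  linarith

theorem first_hit {f : ℝ → ℝ} {a b s : ℝ} (hab : a ≤ b) (hf : ContinuousOn f (Icc a b))
    (h0 : f a ≤ s) (h1 : s ≤ f b) : ∃ t ∈ Icc a b, f t = s ∧ ∀ u ∈ Icc a t, f u ≤ s := by
  have hcomp : IsCompact (Icc a b ∩ f ⁻¹' Ici s) :=
    isCompact_Icc.of_isClosed_subset (hf.preimage_isClosed_of_isClosed isClosed_Icc isClosed_Ici) inter_subset_left
  obtain ⟨t, ht, hmin⟩ := hcomp.exists_isLeast ⟨b, right_mem_Icc.2 hab, h1⟩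
  obtain ⟨u, hu, hus⟩ := intermediate_value_Icc ht.1.1 (hf.mono (Icc_subset_Icc_right ht.1.2)) ⟨h0, ht.2⟩
  have hut : u = t := le_antisymm hu.2 (hmin ⟨⟨hu.1, hu.2.trans ht.1.2⟩, hus.ge⟩)
  refine ⟨t, ht.1, hut ▸ hus, fun v hv => ?_⟩
  by_contra hcon
  push Not at hcon
  have : t = v := le_antisymm (hmin ⟨⟨hv.1, hv.2.trans ht.1.2⟩, hcon.le⟩) hv.2
  rw [← this, ← hut, hus] at hcon
  exact lt_irrefl _ hcon

end PartF

open Metric Set MeasureTheory Filter Topology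

section PartG
set_option linter.unusedSectionVars false

variable {E : Type*} [NormedAddCommGroup E] [NormedSpace ℂ E]
variable {Ω D : Set E} {r c M R₀ C ν : ℝ}

/-- near-minimality of the curve on `[a,b]` -/
def NearMin (Ω : Set E) (σ g : ℝ → E) (a b : ℝ) : Prop :=
  ∀ u v, a ≤ u → u ≤ v → v ≤ b → ∀ R, HasCurve Ω (σ u) (σ v) R →
    ∫ t in u..v, kobMetric Ω (σ t) (g t) ≤ R + 1

theorem Setup.piece [ProperSpace E] (h : Setup Ω D r c M R₀ C ν) {s : ℝ} (hs : 0 < s) :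
    ∃ K, 0 < K ∧ ∀ (σ g : ℝ → E) (a b : ℝ), a ≤ b → IsACWithDeriv σ g a b →
      (∀ t ∈ Icc a b, Loc Ω D s (σ t)) → NearMin Ω σ g a b →
      (∫ t in a..b, kobMetric D (σ t) (g t) ≤ (∫ t in a..b, kobMetric Ω (σ t) (g t)) + K) ∧
      ∃ t ∈ Icc a b, dist (σ a) (σ b) ≤ K * lam D (σ t) ^ (-(ν / 2)) := by
  obtain ⟨A, hA, hup⟩ := h.upper
  obtain ⟨C₂, hC₂, hnorm⟩ := h.norm_le_kob hs
  obtain ⟨C₃, hC₃, hroy⟩ := h.royden hs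
  have hν := h.hν
  set m := ν / 2 with hm
  have hm0 : 0 < m := by positivity
  set B := 2 * A + 2 with hB
  have hB0 : 0 < B := by positivity
  have hBp : 0 < B ^ (1 + m) := Real.rpow_pos_of_pos hB0 _
  refine ⟨(C₂ + C₃) * B ^ (1 + m) * (2 / m), by positivity, ?_⟩
  intro σ g a b hab hAC hloc hmin
  have hmD : MapsTo σ (Icc a b) D := fun t ht => (hloc t ht).1
  have hmΩ : MapsTo σ (Icc a b) Ω := fun t ht => h.sub (hmD ht)
  have hσ := hAC.continuousOn hab
  have hbc : ContinuousOn (fun t => bdist D (σ t)) (Icc a b) :=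
    (continuous_infDist_pt _).comp_continuousOn hσ
  obtain ⟨c₀, hc₀, hmax⟩ := isCompact_Icc.exists_isMaxOn (nonempty_Icc.2 hab) hbc
  have hlam : ∀ t ∈ Icc a b, lam D (σ c₀) ≤ lam D (σ t) := by
    intro t ht
    apply max_le_max le_rfl
    apply neg_le_neg
    exact Real.log_le_log (h.bdist_pos (hmD ht)) (hmax ht)
  set k : ℝ → ℝ := fun t => kobMetric Ω (σ t) (g t) with hk
  have hk0 : ∀ t, 0 ≤ k t := fun t => kobMetric_nonneg _ _ _
  have hkint : IntervalIntegrable k volume a b := kob_integrable h.Ωo hab hAC hmΩ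
  have hkDint : IntervalIntegrable (fun t => kobMetric D (σ t) (g t)) volume a b :=
    kob_integrable h.isOpen hab hAC hmD
  obtain ⟨hWint, hW⟩ := weight_int hab hc₀ hm0 hkint hk0
  set W : ℝ → ℝ := fun t => (1 + |∫ u in c₀..t, k u|) ^ (-(1 + m)) with hWdef
  have hcurve : ∀ u ∈ Icc a b, ∀ v ∈ Icc a b,
      HasCurve Ω (σ u) (σ v) (A * (lam D (σ u) + lam D (σ v))) := fun u hu v hv =>
    (hup _ (hmD hu) _ (hmD hv)).mono_set h.isOpen h.sub
  have habs : ∀ t ∈ Icc a b, 1 + |∫ u in c₀..t, k u| ≤ B * lam D (σ t) := by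
    intro t ht
    have h1 := one_le_lam D (σ t)
    have h2 := hlam t ht
    have h3 : |∫ u in c₀..t, k u| ≤ A * (lam D (σ c₀) + lam D (σ t)) + 1 := by
      rcases le_total c₀ t with hct | hct
      · rw [abs_of_nonneg (intervalIntegral.integral_nonneg hct (fun u _ => hk0 u))]
        exact hmin c₀ t hc₀.1 hct ht.2 _ (hcurve _ hc₀ _ ht)
      · rw [intervalIntegral.integral_symm, abs_neg,
          abs_of_nonneg (intervalIntegral.integral_nonneg hct (fun u _ => hk0 u)), add_comm (lam D (σ c₀))]
        exact hmin t c₀ ht.1 hct hc₀.2 _ (hcurve _ ht _ hc₀)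
    have h4 := mul_le_mul_of_nonneg_left h2 hA.le
    rw [hB]
    nlinarith
  have hlamW : ∀ t ∈ Icc a b, lam D (σ t) ^ (-(1 + m)) ≤ B ^ (1 + m) * W t := by
    intro t ht
    have hl : 0 < lam D (σ t) := by linarith [one_le_lam D (σ t)]
    have h1 : (B * lam D (σ t)) ^ (-(1 + m)) ≤ W t :=
      Real.rpow_le_rpow_of_nonpos (by positivity) (habs t ht) (by linarith)
    rw [Real.mul_rpow hB0.le hl.le, Real.rpow_neg hB0.le] at h1
    calc lam D (σ t) ^ (-(1 + m)) = B ^ (1 + m) * ((B ^ (1 + m))⁻¹ * lam D (σ t) ^ (-(1 + m))) := by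
          field_simp
      _ ≤ _ := by gcongr
  have hlamν : ∀ t ∈ Icc a b, lam D (σ t) ^ (-(1 + ν)) ≤
      lam D (σ c₀) ^ (-m) * (B ^ (1 + m) * W t) := by
    intro t ht
    have hl : 0 < lam D (σ t) := by linarith [one_le_lam D (σ t)]
    have hl0 : 0 < lam D (σ c₀) := by linarith [one_le_lam D (σ c₀)]
    have e : -(1 + ν) = -m + -(1 + m) := by rw [hm]; ring
    rw [e, Real.rpow_add hl]
    apply mul_le_mul _ (hlamW t ht) (Real.rpow_nonneg hl.le _) (Real.rpow_nonneg hl0.le _)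
    exact Real.rpow_le_rpow_of_nonpos hl0 (hlam t ht) (by linarith)
  have hl1 : lam D (σ c₀) ^ (-m) ≤ 1 :=
    Real.rpow_le_one_of_one_le_of_nonpos (one_le_lam _ _) (by linarith)
  have hl0 : 0 ≤ lam D (σ c₀) ^ (-m) :=
    Real.rpow_nonneg (by linarith [one_le_lam D (σ c₀)]) _
  have hW0 : ∀ t, 0 ≤ W t := fun t => Real.rpow_nonneg (by positivity) _
  constructor
  · have h1 : ∫ t in a..b, kobMetric D (σ t) (g t) ≤
        ∫ t in a..b, (k t + C₃ * B ^ (1 + m) * (W t * k t)) := by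
      apply intervalIntegral.integral_mono_on hab hkDint (hkint.add (hWint.const_mul _))
      intro t ht
      have h2 := hroy _ (hloc t ht) (g t)
      have h3 := hlamν t ht
      have h4 : lam D (σ c₀) ^ (-m) * (B ^ (1 + m) * W t) ≤ 1 * (B ^ (1 + m) * W t) :=
        mul_le_mul_of_nonneg_right hl1 (mul_nonneg hBp.le (hW0 t))
      calc kobMetric D (σ t) (g t) ≤ (1 + C₃ * lam D (σ t) ^ (-(1 + ν))) * k t := h2
        _ ≤ (1 + C₃ * (1 * (B ^ (1 + m) * W t))) * k t := by
          apply mul_le_mul_of_nonneg_right _ (hk0 t)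
          gcongr
          exact h3.trans h4
        _ = _ := by ring
    rw [intervalIntegral.integral_add hkint (hWint.const_mul _),
      intervalIntegral.integral_const_mul] at h1
    have h2 : C₃ * B ^ (1 + m) * ∫ t in a..b, W t * k t ≤ C₃ * B ^ (1 + m) * (2 / m) :=
      mul_le_mul_of_nonneg_left hW (by positivity)
    have h3 : 0 ≤ C₂ * B ^ (1 + m) * (2 / m) := by positivity
    have e : (C₂ + C₃) * B ^ (1 + m) * (2 / m) =
      C₂ * B ^ (1 + m) * (2 / m) + C₃ * B ^ (1 + m) * (2 / m) := by ring
    rw [e]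
    linarith
  · refine ⟨c₀, hc₀, ?_⟩
    have h0 : σ b - σ a = ∫ t in a..b, g t := by
      rw [hAC.2 b (right_mem_Icc.2 hab), add_sub_cancel_left]
    rw [dist_comm, dist_eq_norm, h0]
    have h1 : ∫ t in a..b, ‖g t‖ ≤
        ∫ t in a..b, C₂ * lam D (σ c₀) ^ (-m) * B ^ (1 + m) * (W t * k t) := by
      apply intervalIntegral.integral_mono_on hab hAC.1.norm (hWint.const_mul _)
      intro t ht
      calc ‖g t‖ ≤ C₂ * lam D (σ t) ^ (-(1 + ν)) * k t := hnorm _ (hloc t ht) (g t)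
        _ ≤ C₂ * (lam D (σ c₀) ^ (-m) * (B ^ (1 + m) * W t)) * k t := by
          apply mul_le_mul_of_nonneg_right _ (hk0 t)
          exact mul_le_mul_of_nonneg_left (hlamν t ht) hC₂.le
        _ = _ := by ring
    refine (intervalIntegral.norm_integral_le_integral_norm hab).trans (h1.trans ?_)
    rw [intervalIntegral.integral_const_mul]
    calc C₂ * lam D (σ c₀) ^ (-m) * B ^ (1 + m) * ∫ t in a..b, W t * k t
        ≤ C₂ * lam D (σ c₀) ^ (-m) * B ^ (1 + m) * (2 / m) :=
          mul_le_mul_of_nonneg_left hW (by positivity)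
      _ = (C₂ * B ^ (1 + m) * (2 / m)) * lam D (σ c₀) ^ (-m) := by ring
      _ ≤ ((C₂ + C₃) * B ^ (1 + m) * (2 / m)) * lam D (σ c₀) ^ (-m) := by
          gcongr
          linarith

theorem Setup.main [ProperSpace E] (h : Setup Ω D r c M R₀ C ν) {s : ℝ} (hs : 0 < s) :
    ∃ K, 0 < K ∧ ∀ p q, Loc Ω D s p → Loc Ω D s q → kobDist D p q ≤ kobDist Ω p q + K := by
  obtain ⟨A, hA, hup⟩ := h.upper
  obtain ⟨C', hC', hpiece⟩ := h.piece (half_pos hs)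
  have hν := h.hν
  have hm0 : 0 < ν / 2 := by positivity
  set Λ := (2 * C' / s) ^ (1 / (ν / 2)) with hΛ
  have hΛ0 : 0 < Λ := Real.rpow_pos_of_pos (by positivity) _
  have hlamΛ : ∀ x : E, s / 2 ≤ C' * lam D x ^ (-(ν / 2)) → lam D x ≤ Λ := by
    intro x hx
    have hl : 0 < lam D x := by linarith [one_le_lam D x]
    have hp : 0 < lam D x ^ (ν / 2) := Real.rpow_pos_of_pos hl _
    rw [Real.rpow_neg hl.le, ← div_eq_mul_inv, le_div_iff₀ hp] at hx
    have h1 : lam D x ^ (ν / 2) ≤ 2 * C' / s := by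
      rw [le_div_iff₀ hs]; linarith
    have h2 := Real.rpow_le_rpow hp.le h1 (show 0 ≤ 1 / (ν / 2) by positivity)
    rwa [← Real.rpow_mul hl.le, mul_one_div_cancel hm0.ne', Real.rpow_one] at h2
  refine ⟨1 + 2 * C' + A * (2 * Λ), by positivity, fun p q hp hq => ?_⟩
  obtain ⟨a, b, σ, g, hab, hAC, hm, ha, hb, hlen⟩ :=
    ((hup p hp.1 q hq.1).mono_set h.isOpen h.sub).exists_near one_pos
  have hkint := kob_integrable h.Ωo hab hAC hm
  have hI : ∀ u ∈ Icc a b, ∀ v ∈ Icc a b,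
      IntervalIntegrable (fun t => kobMetric Ω (σ t) (g t)) volume u v := by
    intro u hu v hv
    apply hkint.mono_set
    rw [uIcc_of_le hab]
    exact uIcc_subset_Icc hu hv
  have haI : a ∈ Icc a b := left_mem_Icc.2 hab
  have hbI : b ∈ Icc a b := right_mem_Icc.2 hab
  have hsubC : ∀ u v, a ≤ u → u ≤ v → v ≤ b →
      HasCurve Ω (σ u) (σ v) (∫ t in u..v, kobMetric Ω (σ t) (g t)) := fun u v h1 h2 h3 =>
    ⟨u, v, σ, g, h2, hAC.sub h1 h2 h3, hm.mono_left (Icc_subset_Icc h1 h3), rfl, rfl, le_rfl⟩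
  have hsplit : ∀ u v, a ≤ u → u ≤ v → v ≤ b →
      ∫ t in a..b, kobMetric Ω (σ t) (g t) = (∫ t in a..u, kobMetric Ω (σ t) (g t)) +
        (∫ t in u..v, kobMetric Ω (σ t) (g t)) + ∫ t in v..b, kobMetric Ω (σ t) (g t) := by
    intro u v h1 h2 h3
    have hu : u ∈ Icc a b := ⟨h1, h2.trans h3⟩
    have hv : v ∈ Icc a b := ⟨h1.trans h2, h3⟩
    rw [intervalIntegral.integral_add_adjacent_intervals (hI a haI u hu) (hI u hu v hv),
      intervalIntegral.integral_add_adjacent_intervals (hI a haI v hv) (hI v hv b hbI)]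
  have hmin : NearMin Ω σ g a b := by
    intro u v h1 h2 h3 R hR
    have h4 := ((hsubC a u le_rfl h1 (h2.trans h3)).trans h.Ωo
      (hR.trans h.Ωo (hsubC v b (h1.trans h2) h3 le_rfl))).kobDist_le
    rw [ha, hb] at h4
    linarith [hsplit u v h1 h2 h3]
  have hminsub : ∀ u v, a ≤ u → v ≤ b → NearMin Ω σ g u v := fun u v h1 h3 x y hx hxy hy =>
    hmin x y (h1.trans hx) hxy (hy.trans h3)
  -- pieces inside the localised region transfer to `D`
  have htrans : ∀ u v, a ≤ u → u ≤ v → v ≤ b → (∀ t ∈ Icc u v, Loc Ω D (s / 2) (σ t)) →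
      HasCurve D (σ u) (σ v) ((∫ t in u..v, kobMetric Ω (σ t) (g t)) + C') :=
    fun u v h1 h2 h3 h4 =>
    ⟨u, v, σ, g, h2, hAC.sub h1 h2 h3, fun t ht => (h4 t ht).1, rfl, rfl,
      (hpiece σ g u v h2 (hAC.sub h1 h2 h3) h4 (hminsub u v h1 h3)).1⟩
  have hσ := hAC.continuousOn hab
  by_cases hcase : ∀ t ∈ Icc a b, dist (σ t) p ≤ s / 2 ∨ dist (σ t) q ≤ s / 2
  · have h1 := (htrans a b le_rfl hab le_rfl (fun t ht => (hcase t ht).elim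
      (fun hd => hp.near hs (hm ht) hd) (fun hd => hq.near hs (hm ht) hd))).kobDist_le
    rw [ha, hb] at h1
    have : 0 < A * (2 * Λ) := by positivity
    linarith
  · push Not at hcase
    obtain ⟨t₀, ht₀, hd1, hd2⟩ := hcase
    have hcp : ContinuousOn (fun t => dist (σ t) p) (Icc a b) :=
      continuous_dist.comp_continuousOn (hσ.prodMk continuousOn_const)
    have hcq : ContinuousOn (fun t => dist (σ t) q) (Icc a b) :=
      continuous_dist.comp_continuousOn (hσ.prodMk continuousOn_const)
    obtain ⟨t₁, ht₁, he1, hle1⟩ := first_hit ht₀.1 (hcp.mono (Icc_subset_Icc_right ht₀.2))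
      (s := s / 2) (by simp only [ha, dist_self]; positivity) hd1.le
    have hcq' : ContinuousOn (fun t => dist (σ (-t)) q) (Icc (-b) (-t₀)) :=
      hcq.comp (f := fun t : ℝ => -t) continuous_neg.continuousOn (fun t ht =>
        ⟨by linarith [ht.2, ht₀.1], by linarith [ht.1]⟩)
    obtain ⟨t₂', ht₂, he2, hle2⟩ := first_hit (neg_le_neg ht₀.2) hcq'
      (s := s / 2) (by simp only [neg_neg, hb, dist_self]; positivity) (by simpa using hd2.le)
    obtain ⟨t₂, rfl⟩ : ∃ t₂, t₂' = -t₂ := ⟨-t₂', by simp⟩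
    simp only [neg_neg] at he2
    have ht₂a : t₀ ≤ t₂ := by linarith [ht₂.2]
    have ht₂b : t₂ ≤ b := by linarith [ht₂.1]
    have hat₂ : a ≤ t₂ := ht₀.1.trans ht₂a
    have ht₁b : t₁ ≤ b := ht₁.2.trans ht₀.2
    have hloc1 : ∀ t ∈ Icc a t₁, Loc Ω D (s / 2) (σ t) := fun t ht =>
      hp.near hs (hm ⟨ht.1, ht.2.trans ht₁b⟩) (hle1 t ht)
    have hloc2 : ∀ t ∈ Icc t₂ b, Loc Ω D (s / 2) (σ t) := fun t ht =>
      hq.near hs (hm ⟨hat₂.trans ht.1, ht.2⟩) (by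
        have := hle2 (-t) ⟨by linarith [ht.2], by linarith [ht.1]⟩
        simpa using this)
    obtain ⟨-, x, hx, hdx⟩ := hpiece σ g a t₁ ht₁.1 (hAC.sub le_rfl ht₁.1 ht₁b) hloc1
      (hminsub a t₁ le_rfl ht₁b)
    obtain ⟨-, y, hy, hdy⟩ := hpiece σ g t₂ b ht₂b (hAC.sub hat₂ ht₂b le_rfl) hloc2
      (hminsub t₂ b hat₂ le_rfl)
    rw [ha, dist_comm, he1] at hdx
    rw [hb, he2] at hdy
    have hx1 := hlamΛ _ hdx
    have hy1 := hlamΛ _ hdy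
    have hxy : x ≤ y := hx.2.trans (ht₁.2.trans (ht₂a.trans hy.1))
    have c1 := htrans a x le_rfl hx.1 (hxy.trans hy.2) (fun t ht => hloc1 t ⟨ht.1, ht.2.trans hx.2⟩)
    have c2 := htrans y b (hat₂.trans hy.1) hy.2 le_rfl (fun t ht => hloc2 t ⟨hy.1.trans ht.1, ht.2⟩)
    have c3 := hup _ (hloc1 x hx).1 _ (hloc2 y hy).1
    have c4 := (c1.trans h.isOpen (c3.trans h.isOpen c2)).kobDist_le
    rw [ha, hb] at c4
    have h5 := hsplit x y hx.1 hxy hy.2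
    have h6 : 0 ≤ ∫ t in x..y, kobMetric Ω (σ t) (g t) :=
      intervalIntegral.integral_nonneg hxy (fun u _ => kobMetric_nonneg _ _ _)
    have h7 : A * (lam D (σ x) + lam D (σ y)) ≤ A * (2 * Λ) := by gcongr; linarith
    linarith

end PartG

theorem statement_8 {n : ℕ} (hn : 2 ≤ n)
    (Ω U : Set (EuclideanSpace ℂ (Fin n)))
    (hΩo : IsOpen Ω) (hΩc : IsConnected Ω) (hΩb : Bornology.IsBounded Ω)
    (hUo : IsOpen U)
    (hlog : LogTypeCConvex (Ω ∩ U))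
    (hdini : ∀ x ∈ frontier (Ω ∩ U), DiniSmoothBoundaryPoint (Ω ∩ U) x)
    (V : Set (EuclideanSpace ℂ (Fin n))) (hVo : IsOpen V) (hVU : V ⊆ U)
    (hclV : closure V ⊆ U) :
    ∃ K : ℝ, 0 < K ∧ ∀ p ∈ V ∩ Ω, ∀ q ∈ V ∩ Ω,
      kobDist Ω p q ≤ kobDist (Ω ∩ U) p q ∧
      kobDist (Ω ∩ U) p q ≤ kobDist Ω p q + K := by
  set D := Ω ∩ U with hD
  obtain ⟨hDo, hDne, hDb, hDC, C, ν, hC, hν, hlogD⟩ := hlog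
  haveI : Nontrivial (EuclideanSpace ℂ (Fin n)) := by
    haveI : Nonempty (Fin n) := ⟨⟨0, by omega⟩⟩
    infer_instance
  obtain ⟨r, c, M, hgeom⟩ := exists_geomDom hDo hDne hDb hDC (fun ξ hξ => by
    obtain ⟨W, ρ, ω, h1, -⟩ := hdini ξ hξ
    exact ⟨W, ρ, h1⟩)
  obtain ⟨R₁, hR₁⟩ := Metric.isBounded_iff.1 hΩb
  have hset : Setup Ω D r c M (max 1 (R₁ + 1)) C ν :=
    { toGeomDom := hgeom
      Ωo := hΩo
      sub := inter_subset_left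
      hR₀ := le_max_left _ _
      diam := fun x hx y hy =>
        lt_of_lt_of_le (by linarith [hR₁ hx hy] : dist x y < R₁ + 1) (le_max_right _ _)
      hC := hC
      hν := hν
      hlog := hlogD }
  have hcomp : IsCompact (closure (V ∩ Ω)) := (hΩb.subset inter_subset_right).isCompact_closure
  have hsubU : closure (V ∩ Ω) ⊆ U := (closure_mono inter_subset_left).trans hclV
  obtain ⟨s, hs, hsU⟩ := hcomp.exists_thickening_subset_open hUo hsubU
  have hloc : ∀ p ∈ V ∩ Ω, Loc Ω D s p := by
    intro p hp
    refine ⟨⟨hp.2, hVU hp.1⟩, fun z hz => ⟨hz.2, hsU ?_⟩⟩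
    exact Metric.mem_thickening_iff.2 ⟨p, subset_closure hp, hz.1⟩
  obtain ⟨K, hK, hmain⟩ := hset.main hs
  obtain ⟨A, hA, hup⟩ := hset.upper
  refine ⟨K, hK, fun p hp q hq => ⟨?_, hmain p q (hloc p hp) (hloc q hq)⟩⟩
  exact kobDist_mono hDo inter_subset_left (hup p (hloc p hp).1 q (hloc q hq).1)
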